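/- Let n ≥ 8. For a generic choice of linear subspaces L, M, N ⊂ ℂ^{n+1} of dimensions n−3, n−3, n−2 respectively (codimensions 4, 4, 3), of points l₁,…,l₄ ∈ L, m₁,…,m₄ ∈ M, and n₁,…,n₅ ∈ N, the ℂ-vector space of homogeneous cubic polynomials in ℂ[x₀,…,xₙ] that vanish at every point of L ∪ M ∪ N and are singular at all thirteen points l₁,…,l₄,m₁,…,m₄,n₁,…,n₅ has dimension 1 (i.e., there is a unique such cubic hypersurface W up to scalar); moreover, every nonzero vector q ∈ ℂ^{n+1} at which W is singular lies in L ∪ M ∪ N. -/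

import Mathlib

/-! Choose linear forms `x i` cutting out `L` and dual to the points `m j`, linear forms `y j`
cutting out `M` and dual to the points `l i`, and let `z` be the quotient map by `N`. For every pair
`(i, j)` let `d i j` be the linear form that vanishes on `N`, at `m i` and at `l j`.

*Dimension.* The cubics that contain `L ∪ M ∪ N` and are singular at all `m i` and `l j` are exactly
the combinations `∑ s i j * x i * y j * d i j` (`Dat.eq_poly`): subtracting such a combination, one
may assume that the polarisation vanishes at all triples `(m i, l j, w)` for one vector `w` of
`L ∩ M`, and then it vanishes identically (`tlemma`). Singularity at a point of `N` imposes three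
linear conditions on the sixteen coefficients `s i j`, so five points impose fifteen; for generic
points these are independent and leave one cubic, whose coefficients are cofactors (`Dat.sol`).

*Singular points.* This is a Bertini argument, carried out at the generic point. Let `K` be a finite
extension of the field of rational functions in the parameters, and `q` a `K`-rational singular point
of the cubic with the generic parameters. A derivation of `K` that moves only the points of `N`
changes the fifteen conditions in an arbitrary way, hence moves the coefficient vector in an arbitrary
direction modulo itself. Differentiating `f q = 0`, where the derivative of `q` contributes nothing
because `q` is singular, shows that all sixteen cubics `x i * y j * d i j` vanish at `q`
(`Dat.bertini`). A singular point in this base locus lies on `L ∪ M ∪ N` (`Dat.base_locus`). Since the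
polynomial system for a singular point outside `L ∪ M ∪ N` has no solution over any such `K`, the
Nullstellensatz shows that it has none for generic complex parameters (`generic_no_solution`).

All these arguments need finitely many explicit polynomials in the parameters to be nonzero. Their
product is `Raw.gen`, and it does not vanish at a sample configuration in which `L` and `M` are
coordinate subspaces (`Sample.gen_ne_zero`). -/

open MvPolynomial

noncomputable section

/-- The linear form `a₀x₀ + ⋯ + aₙxₙ` with coefficient vector `a`. -/
def linForm {n : ℕ} (a : Fin (n + 1) → ℂ) : MvPolynomial (Fin (n + 1)) ℂ :=
  ∑ i, C (a i) * X i

/-- Evaluation at the point `v`, as a linear map. -/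
def evalAt {n : ℕ} (v : Fin (n + 1) → ℂ) : MvPolynomial (Fin (n + 1)) ℂ →ₗ[ℂ] ℂ :=
  (aeval v).toLinearMap

/-- The linear map `f ↦ (∂f/∂xᵢ)(p)`. -/
def evalPDeriv {n : ℕ} (p : Fin (n + 1) → ℂ) (i : Fin (n + 1)) :
    MvPolynomial (Fin (n + 1)) ℂ →ₗ[ℂ] ℂ :=
  evalAt p ∘ₗ (pderiv i).toLinearMap

/-- `f` is singular at `p`: all partial derivatives of `f` vanish at `p`. -/
def SingularAt {n : ℕ} (f : MvPolynomial (Fin (n + 1)) ℂ) (p : Fin (n + 1) → ℂ) : Prop :=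
  ∀ i, evalPDeriv p i f = 0

/-- The space of homogeneous degree-`d` polynomials in `n+1` variables that vanish at every
point of `V` and are singular at every point of `S`. -/
def SingSpace (n : ℕ) (d : ℕ) (S V : Set (Fin (n + 1) → ℂ)) :
    Submodule ℂ (MvPolynomial (Fin (n + 1)) ℂ) :=
  homogeneousSubmodule (Fin (n + 1)) ℂ d ⊓ (⨅ v ∈ V, LinearMap.ker (evalAt v)) ⊓
    ⨅ p ∈ S, ⨅ i, LinearMap.ker (evalPDeriv p i)

/-- A property of parameters `t : ι → ℂ` holds for a generic choice of `t` if there is a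
nonzero polynomial `F` in the variables `ι` such that the property holds whenever
`F(t) ≠ 0`. -/
def Generic {ι : Type} [Fintype ι] (P : (ι → ℂ) → Prop) : Prop :=
  ∃ F : MvPolynomial ι ℂ, F ≠ 0 ∧ ∀ t : ι → ℂ, eval t F ≠ 0 → P t

end

set_option linter.unusedSectionVars false
set_option linter.unusedSimpArgs false

/-! ### Forms, points and the cubic -/

noncomputable section CubicData
open Matrix

/-- The determinant of three vectors of length three. -/
def det3 {S : Type*} [CommRing S] (a b c : Fin 3 → S) : S :=
  a 0 * (b 1 * c 2 - b 2 * c 1) - a 1 * (b 0 * c 2 - b 2 * c 0) + a 2 * (b 0 * c 1 - b 1 * c 0)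

/-- The cross product, so that `det3 a b c = crs a b ⬝ᵥ c`. -/
def crs {S : Type*} [CommRing S] (a b : Fin 3 → S) : Fin 3 → S :=
  ![a 1 * b 2 - a 2 * b 1, a 2 * b 0 - a 0 * b 2, a 0 * b 1 - a 1 * b 0]

/-- An enumeration of the fifteen conditions imposed by the points of `N` and one
normalisation, by the sixteen index pairs. -/
def eqv16 : Fin 4 × Fin 4 ≃ Option (Fin 5 × Fin 3) :=
  Fintype.equivOfCardEq (by simp)

/-- The data attached to a configuration: linear forms `X i`, `Y j`, `Z k` cutting out `L`, `M`,
`N`, the points `m i`, `l j`, `p a`, three directions `ν` in `N`, and two vectors of `L ∩ M`. -/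
structure Dat (ι : Type*) (S : Type*) where
  X : Matrix (Fin 4) ι S
  Y : Matrix (Fin 4) ι S
  Z : Matrix (Fin 3) ι S
  m : Fin 4 → ι → S
  l : Fin 4 → ι → S
  p : Fin 5 → ι → S
  ν : Fin 3 → ι → S
  w1 : ι → S
  w2 : ι → S

namespace Dat
variable {ι : Type*} [Fintype ι] {S T : Type*} [CommRing S] [CommRing T]

/-- Transport along a ring homomorphism. -/
def map (D : Dat ι S) (φ : S →+* T) : Dat ι T where
  X := D.X.map φ
  Y := D.Y.map φ
  Z := D.Z.map φ
  m i := φ ∘ D.m i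
  l i := φ ∘ D.l i
  p i := φ ∘ D.p i
  ν i := φ ∘ D.ν i
  w1 := φ ∘ D.w1
  w2 := φ ∘ D.w2

variable (D : Dat ι S)

/-- The values at `q` of the four forms defining `L`. -/
def x (q : ι → S) : Fin 4 → S := D.X *ᵥ q
/-- The values at `q` of the four forms defining `M`. -/
def y (q : ι → S) : Fin 4 → S := D.Y *ᵥ q
/-- The values at `q` of the three forms defining `N`. -/
def z (q : ι → S) : Fin 3 → S := D.Z *ᵥ q
/-- The image of `m i` modulo `N`. -/
def cM (i : Fin 4) : Fin 3 → S := D.z (D.m i)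
/-- The image of `l j` modulo `N`. -/
def cL (j : Fin 4) : Fin 3 → S := D.z (D.l j)
/-- The image of `w1` modulo `N`. -/
def P : Fin 3 → S := D.z D.w1
/-- The image of `w2` modulo `N`. -/
def Q : Fin 3 → S := D.z D.w2

/-- The linear form vanishing on `N`, `m i` and `l j`. -/
def d (i j : Fin 4) (q : ι → S) : S := det3 (D.cM i) (D.cL j) (D.z q)

/-- The cubic `∑ s i j * x i * y j * d i j`. -/
def cub (s : Fin 4 → Fin 4 → S) (q : ι → S) : S :=
  ∑ i, ∑ j, s i j * (D.x q i * D.y q j * D.d i j q)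

/-- The derivative of `cub s` at `q` in the direction `v`. -/
def psi (s : Fin 4 → Fin 4 → S) (q v : ι → S) : S :=
  ∑ i, ∑ j, s i j * (D.x v i * D.y q j * D.d i j q + D.x q i * D.y v j * D.d i j q
    + D.x q i * D.y q j * D.d i j v)

/-- The differential of `cub s` at a point `p` of `N` factors through `V / N`; this is the
resulting vector of length three. -/
def row (p : ι → S) (s : Fin 4 → Fin 4 → S) : Fin 3 → S := fun k =>
  ∑ i, ∑ j, s i j * (D.x p i * D.y p j * crs (D.cM i) (D.cL j) k)

/-- The derivative of `row p s` with respect to `p` in the direction `v`. -/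
def rowD (p v : ι → S) (s : Fin 4 → Fin 4 → S) : Fin 3 → S := fun k =>
  ∑ i, ∑ j, s i j * ((D.x v i * D.y p j + D.x p i * D.y v j) * crs (D.cM i) (D.cL j) k)

/-- The matrix of the linear system `row (p a) s = 0`, with one more row selecting `s 0 0`. -/
def E : Matrix (Fin 4 × Fin 4) (Fin 4 × Fin 4) S := Matrix.of fun r c =>
  match eqv16 r with
  | none => if c = (0, 0) then 1 else 0
  | some (a, k) => D.x (D.p a) c.1 * D.y (D.p a) c.2 * crs (D.cM c.1) (D.cL c.2) k

/-- A solution of the linear system, given by cofactors; its entry at `(0, 0)` is the determinant. -/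
def sol : Fin 4 → Fin 4 → S := fun i j => D.E.adjugate (i, j) (eqv16.symm none)

/-- The matrix controlling points `q` with `x q` supported at `i`. -/
def HL (i : Fin 4) : Matrix (Fin 4) (Fin 4) S := Matrix.of fun i' j =>
  D.sol i' j * det3 (D.cM i') (D.cL j) (if i' = i then D.P else D.cM i)

/-- The matrix controlling points `q` with `y q` supported at `j`. -/
def HM (j : Fin 4) : Matrix (Fin 4) (Fin 4) S := Matrix.of fun j' i =>
  D.sol i j' * det3 (D.cM i) (D.cL j') (if j' = j then D.P else D.cL j)

/-- The product of all genericity conditions that can be read off from the data; `b` tells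
whether `L ∩ M` has dimension at least two. -/
def good (b : Prop) [Decidable b] : S :=
  (∏ i, ∏ j, ∏ j', if j = j' then 1 else det3 (D.cM i) (D.cL j) (D.cL j')) *
  (∏ i, ∏ i', ∏ j, if i = i' then 1 else det3 (D.cM i) (D.cM i') (D.cL j)) *
  (∏ i, ∏ j, det3 (D.cM i) (D.cL j) D.P) *
  (∏ i, ∏ i', if i = i' then 1 else det3 (D.cM i) (D.cM i') D.P) *
  (∏ j, ∏ j', if j = j' then 1 else det3 (D.cL j) (D.cL j') D.P) *
  (if b then (∏ j, det3 (D.cL j) D.P D.Q) * (∏ i, det3 (D.cM i) D.P D.Q) else 1) *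
  D.E.det * (∏ i, ∏ j, D.sol i j) *
  (∏ a, det3 (D.rowD (D.p a) (D.ν 0) D.sol) (D.rowD (D.p a) (D.ν 1) D.sol)
    (D.rowD (D.p a) (D.ν 2) D.sol)) *
  (∏ i, (D.HL i).det) * (∏ j, (D.HM j).det)

end Dat

section naturality
variable {ι : Type*} [Fintype ι] {S T : Type*} [CommRing S] [CommRing T] (φ : S →+* T)

lemma map_det3 (a b c : Fin 3 → S) : φ (det3 a b c) = det3 (φ ∘ a) (φ ∘ b) (φ ∘ c) := by
  simp [det3]

lemma map_crs (a b : Fin 3 → S) (k : Fin 3) : φ (crs a b k) = crs (φ ∘ a) (φ ∘ b) k := by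
  fin_cases k <;> simp [crs]

namespace Dat
variable (D : Dat ι S)

lemma map_x (q : ι → S) (i) : φ (D.x q i) = (D.map φ).x (φ ∘ q) i := RingHom.map_mulVec φ _ _ _
lemma map_y (q : ι → S) (i) : φ (D.y q i) = (D.map φ).y (φ ∘ q) i := RingHom.map_mulVec φ _ _ _
lemma map_z (q : ι → S) : φ ∘ (D.z q) = (D.map φ).z (φ ∘ q) :=
  funext fun i => RingHom.map_mulVec φ _ _ i
lemma map_cM (i) : φ ∘ (D.cM i) = (D.map φ).cM i := D.map_z φ _
lemma map_cL (i) : φ ∘ (D.cL i) = (D.map φ).cL i := D.map_z φ _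
lemma map_P : φ ∘ D.P = (D.map φ).P := D.map_z φ _
lemma map_Q : φ ∘ D.Q = (D.map φ).Q := D.map_z φ _
lemma map_d (i j) (q : ι → S) : φ (D.d i j q) = (D.map φ).d i j (φ ∘ q) := by
  simp only [d, map_det3, map_cM, map_cL, map_z]
lemma map_psi (s) (q v : ι → S) :
    φ (D.psi s q v) = (D.map φ).psi (fun i j => φ (s i j)) (φ ∘ q) (φ ∘ v) := by
  simp only [psi, map_sum, map_mul, map_add, map_x, map_y, map_d]
lemma map_rowD (p v : ι → S) (s) :
    φ ∘ (D.rowD p v s) = (D.map φ).rowD (φ ∘ p) (φ ∘ v) (fun i j => φ (s i j)) := by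
  funext k
  simp only [rowD, Function.comp_apply, map_sum, map_mul, map_add, map_x, map_y, map_crs, map_cM,
    map_cL]
lemma map_E : D.E.map φ = (D.map φ).E := by
  ext r c
  simp only [E, Matrix.map_apply, Matrix.of_apply]
  rcases eqv16 r with _ | ⟨a, k⟩
  · simp only [apply_ite φ, map_one, map_zero]
  · simp only [map_mul, map_x, map_y, map_crs, map_cM, map_cL]; rfl
lemma map_sol (i j) : φ (D.sol i j) = (D.map φ).sol i j := by
  have := congrFun (congrFun (RingHom.map_adjugate φ D.E) (i, j)) (eqv16.symm none)
  simpa [sol, ← map_E] using this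
lemma map_HL (i) : φ ((D.HL i).det) = ((D.map φ).HL i).det := by
  rw [RingHom.map_det]
  congr 1
  ext i' j
  simp only [HL, RingHom.mapMatrix_apply, Matrix.map_apply, Matrix.of_apply, map_mul, map_sol,
    map_det3, map_cM, map_cL]
  split_ifs <;> simp only [map_P, map_cM]
lemma map_HM (i) : φ ((D.HM i).det) = ((D.map φ).HM i).det := by
  rw [RingHom.map_det]
  congr 1
  ext i' j
  simp only [HM, RingHom.mapMatrix_apply, Matrix.map_apply, Matrix.of_apply, map_mul, map_sol,
    map_det3, map_cM, map_cL]
  split_ifs <;> simp only [map_P, map_cL]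
lemma map_good (b : Prop) [Decidable b] : φ (D.good b) = (D.map φ).good b := by
  have h : ∀ a, (D.map φ).p a = φ ∘ D.p a := fun _ => rfl
  have h' : ∀ a, (D.map φ).ν a = φ ∘ D.ν a := fun _ => rfl
  have hE : φ D.E.det = (D.map φ).E.det := by rw [RingHom.map_det, ← map_E]; rfl
  simp only [good, map_mul, map_prod, apply_ite φ, map_one, map_det3, map_cM, map_cL, map_P, map_Q,
    map_rowD, map_sol, map_HL, map_HM, h, h', hE]

end Dat
end naturality
end CubicData

/-! ### Cubic forms with vanishing mixed polarisation -/

section Tlemma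
variable {K V : Type*} [Field K] [CharZero K] [AddCommGroup V] [Module K V]

/-- Polarisation: a symmetric trilinear form vanishing on the diagonal of a subspace vanishes on
all triples from it. -/
lemma polar_zero (Φ : V →ₗ[K] V →ₗ[K] V →ₗ[K] K) (s12 : ∀ a b c, Φ a b c = Φ b a c)
    (s23 : ∀ a b c, Φ a b c = Φ a c b) (L : Submodule K V) (h : ∀ v ∈ L, Φ v v v = 0)
    {a b c : V} (ha : a ∈ L) (hb : b ∈ L) (hc : c ∈ L) : Φ a b c = 0 := by
  have e1 := h _ (L.add_mem (L.add_mem ha hb) hc)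
  have e2 := h _ (L.add_mem ha hb)
  have e3 := h _ (L.add_mem ha hc)
  have e4 := h _ (L.add_mem hb hc)
  have e5 := h _ ha
  have e6 := h _ hb
  have e7 := h _ hc
  simp only [map_add, LinearMap.add_apply] at e1 e2 e3 e4
  have r1 : Φ a c b = Φ a b c := (s23 _ _ _).symm
  have r2 : Φ b a c = Φ a b c := s12 _ _ _
  have r3 : Φ b c a = Φ a b c := by rw [s23, s12]
  have r4 : Φ c a b = Φ a b c := by rw [s12, s23]
  have r5 : Φ c b a = Φ a b c := by rw [s23, s12, s23]
  have : (6 : K) * Φ a b c = 0 := by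
    linear_combination e1 - e2 - e3 - e4 + e5 + e6 + e7 - r1 - r2 - r3 - r4 - r5
  simpa using this

lemma det3_smul_add {S : Type*} [CommRing S] (a b c d : Fin 3 → S) (r s : S) :
    det3 a b (r • c + s • d) = r * det3 a b c + s * det3 a b d := by
  simp [det3]; ring

/-- Cramer's rule as a relation among four vectors. -/
lemma cramer4 {S : Type*} [CommRing S] (a b c d : Fin 3 → S) :
    det3 b c d • a - det3 a c d • b + det3 a b d • c - det3 a b c • d = 0 := by
  funext k
  fin_cases k <;> simp [det3] <;> ring

lemma det3_comb {F : Type*} [Field F] (a b c d : Fin 3 → F) (h : det3 a b c ≠ 0) :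
    d = (det3 b c d / det3 a b c) • a - (det3 a c d / det3 a b c) • b
      + (det3 a b d / det3 a b c) • c := by
  have := cramer4 a b c d
  funext k
  have hk := congrFun this k
  simp at hk ⊢
  field_simp
  linear_combination -hk

/-- A cubic form, given by its polarisation `Φ`, that vanishes on `L`, `M` and the kernel of `z`, is
singular at the points `m i`, `l j`, and whose polarisation vanishes at all triples
`(m i, l j, w1)`, vanishes identically. The hypothesis `N3` distinguishes whether `L ∩ M` is a
line. -/
lemma tlemma (Φ : V →ₗ[K] V →ₗ[K] V →ₗ[K] K) (s12 : ∀ a b c, Φ a b c = Φ b a c)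
    (s23 : ∀ a b c, Φ a b c = Φ a c b) (L M : Submodule K V) (z : V →ₗ[K] (Fin 3 → K))
    (m l : Fin 4 → V) (w1 w2 : V)
    (hL : ∀ v ∈ L, Φ v v v = 0) (hM : ∀ v ∈ M, Φ v v v = 0) (hN : ∀ v, z v = 0 → Φ v v v = 0)
    (hm : ∀ i, m i ∈ M) (hl : ∀ j, l j ∈ L)
    (sm : ∀ i v, Φ (m i) (m i) v = 0) (sl : ∀ j v, Φ (l j) (l j) v = 0)
    (w1L : w1 ∈ L) (w1M : w1 ∈ M) (w2L : w2 ∈ L) (w2M : w2 ∈ M)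
    (span : ∀ q, ∃ (a b : Fin 4 → K) (w : V), w ∈ L ∧ w ∈ M ∧
      q = ∑ i, a i • m i + ∑ j, b j • l j + w)
    (N2a : ∀ i j, det3 (z (m i)) (z (l j)) (z w1) ≠ 0)
    (N2b : ∀ i i', i ≠ i' → det3 (z (m i)) (z (m i')) (z w1) ≠ 0)
    (N2c : ∀ j j', j ≠ j' → det3 (z (l j)) (z (l j')) (z w1) ≠ 0)
    (N3 : (∀ w, w ∈ L → w ∈ M → ∃ κ : K, w = κ • w1) ∨
      ((∀ j, det3 (z (l j)) (z w1) (z w2) ≠ 0) ∧ ∀ i, det3 (z (m i)) (z w1) (z w2) ≠ 0))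
    (hw : ∀ i j, Φ (m i) (l j) w1 = 0) (v : V) : Φ v v v = 0 := by
  have pL := fun {a b c} => polar_zero Φ s12 s23 L hL (a := a) (b := b) (c := c)
  have pM := fun {a b c} => polar_zero Φ s12 s23 M hM (a := a) (b := b) (c := c)
  -- the value at a point `A + B + w` with `A ∈ M`, `B ∈ L`, `w ∈ L ∩ M`
  have val : ∀ A B w, A ∈ M → B ∈ L → w ∈ L → w ∈ M →
      Φ (A + B + w) (A + B + w) (A + B + w) = 3 * Φ A A B + 3 * Φ B B A + 6 * Φ A B w := by
    intro A B w hA hB hwL hwM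
    simp only [map_add, LinearMap.add_apply]
    have z1 := pM hA hA hA
    have z2 := pM hA hA hwM
    have z3 := pM hA hwM hwM
    have z4 := pM hwM hwM hwM
    have z5 := pL hB hB hB
    have z6 := pL hB hB hwL
    have z7 := pL hB hwL hwL
    have z8 := pM hwM hA hA
    have z9 := pM hA hwM hA
    have z10 := pM hwM hwM hA
    have z11 := pM hwM hA hwM
    have z12 := pL hwL hB hB
    have z13 := pL hB hwL hB
    have z14 := pL hwL hwL hB
    have z15 := pL hwL hB hwL
    have r1 : Φ A w B = Φ A B w := (s23 _ _ _).symm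
    have r2 : Φ B A w = Φ A B w := s12 _ _ _
    have r3 : Φ B w A = Φ A B w := by rw [s23, s12]
    have r4 : Φ w A B = Φ A B w := by rw [s12, s23]
    have r5 : Φ w B A = Φ A B w := by rw [s23, s12, s23]
    have r6 : Φ A B A = Φ A A B := s23 _ _ _
    have r7 : Φ B A A = Φ A A B := by rw [s12, s23]
    have r8 : Φ B A B = Φ B B A := s23 _ _ _
    have r9 : Φ A B B = Φ B B A := by rw [s12, s23]
    rw [z1, z2, z3, z4, z5, z6, z7, z8, z9, z10, z11, z12, z13, z14, z15, r1, r2, r3, r4, r5, r6,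
      r7, r8, r9]
    ring
  have key : ∀ i j w, w ∈ L → w ∈ M → Φ (m i) (l j) w = 0 := by
    rcases N3 with N3 | ⟨N3l, N3m⟩
    · intro i j w wL wM
      obtain ⟨κ, rfl⟩ := N3 w wL wM
      simp [hw]
    · -- a point of `N` of the form `a • m i + b • l j + w` with `a b ≠ 0`
      have nz : ∀ i j (a b : K) w, w ∈ L → w ∈ M → a ≠ 0 → b ≠ 0 →
          z (a • m i + b • l j + w) = 0 → Φ (m i) (l j) w = 0 := by
        intro i j a b w wL wM ha hb hz
        have h1 := hN _ hz
        rw [val _ _ _ (M.smul_mem a (hm i)) (L.smul_mem b (hl j)) wL wM] at h1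
        simp only [map_smul, LinearMap.smul_apply, sm, sl, smul_eq_mul] at h1
        have : (6 * a * b) * Φ (m i) (l j) w = 0 := by linear_combination h1
        rcases mul_eq_zero.1 this with h | h
        · simp [ha, hb] at h
        · exact h
      have nz' : ∀ i j (a b : K) w, w ∈ L → w ∈ M →
          z (a • m i + b • l j + w) = 0 → Φ (m i) (l j) w = 0 := by
        intro i j a b w wL wM hz
        set a0 := det3 (z (l j)) (z w1) (z w2) with ha0
        set b0 := - det3 (z (m i)) (z w1) (z w2) with hb0
        have ha0' : a0 ≠ 0 := N3l j
        have hb0' : b0 ≠ 0 := neg_ne_zero.2 (N3m i)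
        set w0 := det3 (z (m i)) (z (l j)) (z w2) • w1 - det3 (z (m i)) (z (l j)) (z w1) • w2
          with hw0
        have w0L : w0 ∈ L := L.sub_mem (L.smul_mem _ w1L) (L.smul_mem _ w2L)
        have w0M : w0 ∈ M := M.sub_mem (M.smul_mem _ w1M) (M.smul_mem _ w2M)
        have hz0 : z (a0 • m i + b0 • l j + w0) = 0 := by
          rw [← cramer4 (z (m i)) (z (l j)) (z w1) (z w2)]
          simp only [map_add, map_smul, map_sub, hw0, ha0, hb0]
          module
        have h0 := nz i j a0 b0 w0 w0L w0M ha0' hb0' hz0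
        -- perturb by a large enough multiple so that both coefficients are nonzero
        obtain ⟨r, hr⟩ : ∃ r : K, r ∉ ({-a / a0, -b / b0} : Set K) :=
          (Set.toFinite ({-a / a0, -b / b0} : Set K)).exists_notMem
        simp only [Set.mem_insert_iff, Set.mem_singleton_iff, not_or] at hr
        have h1 := nz i j (a + r * a0) (b + r * b0) (w + r • w0)
          (L.add_mem wL (L.smul_mem _ w0L)) (M.add_mem wM (M.smul_mem _ w0M))
          (fun h => hr.1 (by field_simp; linear_combination h))
          (fun h => hr.2 (by field_simp; linear_combination h)) (by
            have : (a + r * a0) • m i + (b + r * b0) • l j + (w + r • w0)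
              = (a • m i + b • l j + w) + r • (a0 • m i + b0 • l j + w0) := by module
            rw [this, map_add, map_smul, hz, hz0]; simp)
        simpa [h0] using h1
      intro i j w wL wM
      -- split off a multiple of `w1`
      set κ := det3 (z (m i)) (z (l j)) (z w) / det3 (z (m i)) (z (l j)) (z w1) with hκ
      have hc := det3_comb (z (m i)) (z (l j)) (z w1) (z w) (N2a i j)
      have h2 := nz' i j (-(det3 (z (l j)) (z w1) (z w) / det3 (z (m i)) (z (l j)) (z w1)))
        (det3 (z (m i)) (z w1) (z w) / det3 (z (m i)) (z (l j)) (z w1)) (w - κ • w1)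
        (L.sub_mem wL (L.smul_mem _ w1L)) (M.sub_mem wM (M.smul_mem _ w1M)) (by
          simp only [map_add, map_smul, map_sub, hκ]
          linear_combination (norm := module) hc)
      simpa [hw] using h2
  have mml : ∀ i i' j, Φ (m i) (m i') (l j) = 0 := by
    intro i i' j
    by_cases hi : i = i'
    · subst hi; exact sm _ _
    have hz : z ((det3 (z (m i')) (z (l j)) (z w1) • m i + (-det3 (z (m i)) (z (l j)) (z w1)) • m i')
        + det3 (z (m i)) (z (m i')) (z w1) • l j + (-det3 (z (m i)) (z (m i')) (z (l j))) • w1)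
        = 0 := by
      rw [← cramer4 (z (m i)) (z (m i')) (z (l j)) (z w1)]
      simp only [map_add, map_smul]
      module
    have h1 := hN _ hz
    rw [val _ _ _ (M.add_mem (M.smul_mem _ (hm i)) (M.smul_mem _ (hm i'))) (L.smul_mem _ (hl j))
      (L.smul_mem _ w1L) (M.smul_mem _ w1M)] at h1
    simp only [map_add, map_smul, LinearMap.add_apply, LinearMap.smul_apply, sm, sl, hw,
      smul_eq_mul, s12 (m i') (m i)] at h1
    have h2 : (6 * det3 (z (m i')) (z (l j)) (z w1) * det3 (z (m i)) (z (l j)) (z w1) *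
      det3 (z (m i)) (z (m i')) (z w1)) * Φ (m i) (m i') (l j) = 0 := by linear_combination -h1
    rcases mul_eq_zero.1 h2 with h | h
    · simp [N2a, N2b _ _ hi] at h
    · exact h
  have llm : ∀ j j' i, Φ (l j) (l j') (m i) = 0 := by
    intro j j' i
    by_cases hj : j = j'
    · subst hj; exact sl _ _
    have hz : z (det3 (z (l j)) (z (l j')) (z w1) • m i + ((-det3 (z (m i)) (z (l j')) (z w1)) • l j
        + (det3 (z (m i)) (z (l j)) (z w1)) • l j')
         + (-det3 (z (m i)) (z (l j)) (z (l j'))) • w1)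
        = 0 := by
      rw [← cramer4 (z (m i)) (z (l j)) (z (l j')) (z w1)]
      simp only [map_add, map_smul]
      module
    have h1 := hN _ hz
    rw [val _ _ _ (M.smul_mem _ (hm i)) (L.add_mem (L.smul_mem _ (hl j)) (L.smul_mem _ (hl j')))
      (L.smul_mem _ w1L) (M.smul_mem _ w1M)] at h1
    simp only [map_add, map_smul, LinearMap.add_apply, LinearMap.smul_apply, sm, sl, hw,
      smul_eq_mul, s12 (l j') (l j)] at h1
    have h2 : (6 * det3 (z (m i)) (z (l j')) (z w1) * det3 (z (m i)) (z (l j)) (z w1) *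
      det3 (z (l j)) (z (l j')) (z w1)) * Φ (l j) (l j') (m i) = 0 := by linear_combination -h1
    rcases mul_eq_zero.1 h2 with h | h
    · simp [N2a, N2c _ _ hj] at h
    · exact h
  obtain ⟨a, b, w, wL, wM, rfl⟩ := span v
  rw [val _ _ _ (M.sum_mem fun i _ => M.smul_mem _ (hm i))
    (L.sum_mem fun i _ => L.smul_mem _ (hl i)) wL wM]
  simp [map_sum, LinearMap.sum_apply, mml, llm, key _ _ _ wL wM]
end Tlemma

/-! ### Polarisation of cubic polynomials -/

section Polar
variable {ι : Type*} [Fintype ι]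

/-- The polarisation of a cubic form, normalised to restrict to the form itself on the diagonal. -/
lemma exists_tri (f : MvPolynomial ι ℂ) (hf : f.IsHomogeneous 3) :
    ∃ Φ : (ι → ℂ) →ₗ[ℂ] (ι → ℂ) →ₗ[ℂ] (ι → ℂ) →ₗ[ℂ] ℂ,
      (∀ a b c, Φ a b c = Φ b a c) ∧ (∀ a b c, Φ a b c = Φ a c b) ∧
      (∀ v, eval v f = Φ v v v) ∧
      ∀ v c, ∑ k, c k * eval v (pderiv k f) = 3 * Φ v v c := by
  classical
  set T : ι → ι → ι → ℂ := fun i j k => eval 0 (pderiv k (pderiv j (pderiv i f))) / 6 with hT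
  have h1 : ∀ i, (pderiv i f).IsHomogeneous 2 := fun i => hf.pderiv
  have h2 : ∀ i j, (pderiv j (pderiv i f)).IsHomogeneous 1 := fun i j => (h1 i).pderiv
  have h3 : ∀ i j k, (pderiv k (pderiv j (pderiv i f))).IsHomogeneous 0 := fun i j k => (h2 i j).pderiv
  have c : ∀ i j : ι, ∀ g : MvPolynomial ι ℂ, pderiv i (pderiv j g) = pderiv j (pderiv i g) := by
    intro i j g
    have h0 : ⁅(pderiv i : Derivation ℂ (MvPolynomial ι ℂ) (MvPolynomial ι ℂ)),
        (pderiv j : Derivation ℂ (MvPolynomial ι ℂ) (MvPolynomial ι ℂ))⁆ = 0 := by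
      refine derivation_ext fun k => ?_
      simp [Derivation.commutator_apply, pderiv_X, Pi.single_apply, apply_ite]
    have := congrArg (fun D => D g) h0
    simp only [Derivation.commutator_apply, Derivation.zero_apply] at this
    exact sub_eq_zero.1 this
  have e3 : ∀ i j k v, eval v (pderiv k (pderiv j (pderiv i f))) = 6 * T i j k := by
    intro i j k v
    have := (totalDegree_eq_zero_iff_eq_C).1 (Nat.le_zero.1 (h3 i j k).totalDegree_le)
    simp only [hT]
    rw [this]; simp; ring
  have e2 : ∀ i j v, eval v (pderiv j (pderiv i f)) = ∑ k, v k * (6 * T i j k) := by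
    intro i j v
    have := congrArg (eval v) (h2 i j).sum_X_mul_pderiv
    simp [e3] at this
    exact this.symm
  have e1 : ∀ i v, 2 * eval v (pderiv i f) = ∑ j, v j * ∑ k, v k * (6 * T i j k) := by
    intro i v
    have := congrArg (eval v) (h1 i).sum_X_mul_pderiv
    simp [e2] at this
    exact this.symm
  have e0 : ∀ v, 3 * eval v f = ∑ i, v i * eval v (pderiv i f) := by
    intro v
    have := congrArg (eval v) hf.sum_X_mul_pderiv
    simp at this
    exact this.symm
  obtain ⟨Φ, ap⟩ : ∃ Φ : (ι → ℂ) →ₗ[ℂ] (ι → ℂ) →ₗ[ℂ] (ι → ℂ) →ₗ[ℂ] ℂ,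
      ∀ a b c, Φ a b c = ∑ i, ∑ j, ∑ k, T i j k * (a i * b j * c k) := by
    refine ⟨∑ i, ∑ j, ∑ k, T i j k • (LinearMap.proj i : (ι → ℂ) →ₗ[ℂ] ℂ).smulRight
      ((LinearMap.proj j : (ι → ℂ) →ₗ[ℂ] ℂ).smulRight (LinearMap.proj k : (ι → ℂ) →ₗ[ℂ] ℂ)), ?_⟩
    intro a b c
    simp [LinearMap.sum_apply, mul_assoc]
  refine ⟨Φ, ?_⟩
  simp only [ap]
  have t12 : ∀ i j k, T i j k = T j i k := fun i j k => by simp only [hT]; rw [c j i f]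
  have t23 : ∀ i j k, T i j k = T i k j := fun i j k => by simp only [hT]; rw [c k j]
  clear_value T
  have D : ∀ v c : ι → ℂ, ∑ k, c k * eval v (pderiv k f) =
      3 * ∑ i, ∑ j, ∑ k, T i j k * (v i * v j * c k) := by
    intro v c
    have : ∀ k, c k * eval v (pderiv k f) = 3 * ∑ i, ∑ j, T i j k * (v i * v j * c k) := by
      intro k
      have := e1 k v
      have : eval v (pderiv k f) = 3 * ∑ i, ∑ j, v i * (v j * T k i j) := by
        have e : ∑ j, v j * ∑ l, v l * (6 * T k j l) = 6 * ∑ i, ∑ j, v i * (v j * T k i j) := by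
          simp only [Finset.mul_sum]
          refine Finset.sum_congr rfl fun _ _ => Finset.sum_congr rfl fun _ _ => by ring
        rw [e] at this
        linear_combination this / 2
      rw [this]
      simp only [Finset.mul_sum]
      refine Finset.sum_congr rfl fun i _ => Finset.sum_congr rfl fun j _ => ?_
      rw [t12 k i j, t23 i k j]; ring
    simp only [this, ← Finset.mul_sum]
    refine congrArg (fun x => 3 * x) ?_
    rw [Finset.sum_comm]
    exact Finset.sum_congr rfl fun i _ => Finset.sum_comm
  refine ⟨?_, ?_, ?_, D⟩
  · intro a b c
    rw [Finset.sum_comm]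
    refine Finset.sum_congr rfl fun i _ => Finset.sum_congr rfl fun j _ =>
      Finset.sum_congr rfl fun k _ => ?_
    rw [t12 j i k]; ring
  · intro a b c
    refine Finset.sum_congr rfl fun i _ => ?_
    rw [Finset.sum_comm]
    refine Finset.sum_congr rfl fun j _ =>
      Finset.sum_congr rfl fun k _ => ?_
    rw [t23 i k j]; ring
  · intro v
    have := e0 v
    rw [D v v] at this
    linear_combination this / 3

end Polar

/-! ### Singular points in the base locus: coordinates -/

section BaseLocus
variable {K : Type*} [Field K]

lemma det3_self23 {S : Type*} [CommRing S] (a b : Fin 3 → S) : det3 a b b = 0 := by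
  simp [det3]; ring
lemma det3_self13 {S : Type*} [CommRing S] (a b : Fin 3 → S) : det3 a b a = 0 := by
  simp [det3]; ring
lemma det3_swap12 {S : Type*} [CommRing S] (a b c : Fin 3 → S) : det3 b a c = -det3 a b c := by
  simp [det3]; ring
lemma det3_smul3 {S : Type*} [CommRing S] (a b c : Fin 3 → S) (r : S) :
    det3 a b (r • c) = r * det3 a b c := by
  simp [det3]; ring

/-- The case of a point whose `x`-coordinates are supported at one index `i₀`. -/
lemma one_support (X Y : Fin 4 → K) (c' c : Fin 4 → Fin 3 → K) (ζ P : Fin 3 → K)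
    (s : Fin 4 → Fin 4 → K) (δx δy : K) (i₀ : Fin 4) (hδx : δx ≠ 0)
    (hs : ∀ i j, s i j ≠ 0)
    (N1a : ∀ i j j', j ≠ j' → det3 (c' i) (c j) (c j') ≠ 0)
    (N2a : ∀ i j, det3 (c' i) (c j) P ≠ 0)
    (H : ∀ y : Fin 4 → K, (∀ i', ∑ j, s i' j * det3 (c' i') (c j) (if i' = i₀ then P else c' i₀)
      * y j = 0) → y = 0)
    (hX : X i₀ ≠ 0) (hX' : ∀ i, i ≠ i₀ → X i = 0) (hζ : ζ ≠ 0)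
    (hA : ∀ i j, X i * Y j * det3 (c' i) (c j) ζ = 0)
    (hW : ∑ i, ∑ j, s i j * (X i * Y j * det3 (c' i) (c j) P) = 0)
    (hL : ∀ j', ∑ i, s i j' * (X i * δy * det3 (c' i) (c j') ζ)
      + ∑ i, ∑ j, s i j * (X i * Y j * det3 (c' i) (c j) (c j')) = 0)
    (hM : ∀ i', ∑ j, s i' j * (δx * Y j * det3 (c' i') (c j) ζ)
      + ∑ i, ∑ j, s i j * (X i * Y j * det3 (c' i) (c j) (c' i')) = 0) : Y = 0 := by
  have red : ∀ f : Fin 4 → K, (∀ i, i ≠ i₀ → f i = 0) → ∑ i, f i = f i₀ := fun f hf =>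
    Finset.sum_eq_single i₀ (fun i _ hi => hf i hi) (by simp)
  -- the functional whose vanishing is extracted from the equations
  have hlam : ∀ v, ∑ i, ∑ j, s i j * (X i * Y j * det3 (c' i) (c j) v)
      = X i₀ * ∑ j, s i₀ j * Y j * det3 (c' i₀) (c j) v := by
    intro v
    rw [red _ (fun i hi => by simp [hX' i hi]), Finset.mul_sum]
    exact Finset.sum_congr rfl fun j _ => by ring
  simp only [hlam] at hW hL hM
  have hW' := (mul_eq_zero.1 hW).resolve_left hX
  by_cases hJ : ∃ j j', j ≠ j' ∧ Y j ≠ 0 ∧ Y j' ≠ 0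
  · obtain ⟨j, j', hjj, hj, hj'⟩ := hJ
    have d1 : det3 (c' i₀) (c j) ζ = 0 := by simpa [hX, hj] using hA i₀ j
    have d2 : det3 (c' i₀) (c j') ζ = 0 := by simpa [hX, hj'] using hA i₀ j'
    obtain ⟨τ, hτ⟩ : ∃ τ : K, ζ = τ • c' i₀ := by
      have := det3_comb (c' i₀) (c j) (c j') ζ (N1a _ _ _ hjj)
      rw [d1, d2] at this
      exact ⟨_, by simpa using this⟩
    have hτ0 : τ ≠ 0 := by rintro rfl; simp at hτ; exact hζ hτ
    have dz : ∀ j, det3 (c' i₀) (c j) ζ = 0 := fun j => by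
      rw [hτ, det3_smul3, det3_self13, mul_zero]
    have hL' : ∀ j', ∑ j, s i₀ j * Y j * det3 (c' i₀) (c j) (c j') = 0 := by
      intro j'
      have := hL j'
      rw [red _ (fun i hi => by simp [hX' i hi]), dz] at this
      simpa [hX] using this
    have hlin : ∀ v, ∑ j, s i₀ j * Y j * det3 (c' i₀) (c j) v = 0 := by
      intro v
      have hv := det3_comb (c' i₀) (c 0) (c 1) v (N1a _ _ _ (by decide))
      generalize det3 (c 0) (c 1) v / _ = α at hv
      generalize det3 (c' i₀) (c 1) v / _ = β at hv
      generalize det3 (c' i₀) (c 0) v / _ = γ at hv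
      have e : ∀ j, s i₀ j * Y j * det3 (c' i₀) (c j) v =
          γ * (s i₀ j * Y j * det3 (c' i₀) (c j) (c 1))
            - β * (s i₀ j * Y j * det3 (c' i₀) (c j) (c 0)) := by
        intro j
        rw [hv]
        simp [det3]; ring
      simp only [e, Finset.sum_sub_distrib, ← Finset.mul_sum, hL', mul_zero, sub_zero]
    refine H Y fun i' => ?_
    split_ifs with hi
    · subst hi
      rw [← hW']
      exact Finset.sum_congr rfl fun j _ => by ring
    · have := hM i'
      rw [hlin, mul_zero, add_zero, hτ] at this
      simp only [det3_smul3] at this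
      have e : ∑ j, s i' j * (δx * Y j * (τ * det3 (c' i') (c j) (c' i₀)))
        = (δx * τ) * ∑ j, s i' j * det3 (c' i') (c j) (c' i₀) * Y j := by
        rw [Finset.mul_sum]
        exact Finset.sum_congr rfl fun j _ => by ring
      rw [e] at this
      simpa [hδx, hτ0] using this
  · push Not at hJ
    by_contra hY
    obtain ⟨j₀, hj₀⟩ := Function.ne_iff.1 hY
    rw [Finset.sum_eq_single j₀ (fun j _ hj => by simp [hJ j₀ j (Ne.symm hj) hj₀]) (by simp)] at hW'
    simp [hs, N2a] at hW'
    exact hj₀ hW'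

/-- Away from `L ∪ M ∪ N`, no base point of the sixteen cubics `x i * y j * d i j` is singular. -/
lemma base_locus_aux (X Y : Fin 4 → K) (c' c : Fin 4 → Fin 3 → K) (ζ P : Fin 3 → K)
    (s : Fin 4 → Fin 4 → K) (δx δy : K) (hδx : δx ≠ 0) (hδy : δy ≠ 0)
    (hs : ∀ i j, s i j ≠ 0)
    (N1a : ∀ i j j', j ≠ j' → det3 (c' i) (c j) (c j') ≠ 0)
    (N1b : ∀ i i' j, i ≠ i' → det3 (c' i) (c' i') (c j) ≠ 0)
    (N2a : ∀ i j, det3 (c' i) (c j) P ≠ 0)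
    (HL : ∀ i₀, ∀ y : Fin 4 → K, (∀ i', ∑ j, s i' j *
      det3 (c' i') (c j) (if i' = i₀ then P else c' i₀) * y j = 0) → y = 0)
    (HM : ∀ j₀, ∀ x : Fin 4 → K, (∀ j', ∑ i, s i j' *
      det3 (c' i) (c j') (if j' = j₀ then P else c j₀) * x i = 0) → x = 0)
    (hA : ∀ i j, X i * Y j * det3 (c' i) (c j) ζ = 0)
    (hW : ∑ i, ∑ j, s i j * (X i * Y j * det3 (c' i) (c j) P) = 0)
    (hL : ∀ j', ∑ i, s i j' * (X i * δy * det3 (c' i) (c j') ζ)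
      + ∑ i, ∑ j, s i j * (X i * Y j * det3 (c' i) (c j) (c j')) = 0)
    (hM : ∀ i', ∑ j, s i' j * (δx * Y j * det3 (c' i') (c j) ζ)
      + ∑ i, ∑ j, s i j * (X i * Y j * det3 (c' i) (c j) (c' i')) = 0) :
    X = 0 ∨ Y = 0 ∨ ζ = 0 := by
  by_contra hcon
  simp only [not_or] at hcon
  obtain ⟨hX, hY, hζ⟩ := hcon
  obtain ⟨i₀, hi₀⟩ := Function.ne_iff.1 hX
  obtain ⟨j₀, hj₀⟩ := Function.ne_iff.1 hY
  simp only [Pi.zero_apply] at hi₀ hj₀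
  by_cases hI : ∃ i, i ≠ i₀ ∧ X i ≠ 0
  · by_cases hJ : ∃ j, j ≠ j₀ ∧ Y j ≠ 0
    · obtain ⟨i, hi, hXi⟩ := hI
      obtain ⟨j, hj, hYj⟩ := hJ
      have mult : ∀ i, X i ≠ 0 → ∃ τ : K, τ ≠ 0 ∧ ζ = τ • c' i := by
        intro i hXi
        have d1 : det3 (c' i) (c j) ζ = 0 := by simpa [hXi, hYj] using hA i j
        have d2 : det3 (c' i) (c j₀) ζ = 0 := by simpa [hXi, hj₀] using hA i j₀
        have := det3_comb (c' i) (c j) (c j₀) ζ (N1a _ _ _ hj)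
        rw [d1, d2] at this
        refine ⟨_, ?_, by simpa using this⟩
        intro h0
        rw [h0] at this
        exact hζ (by simpa using this)
      obtain ⟨τ, hτ0, hτ⟩ := mult i hXi
      obtain ⟨τ', hτ0', hτ'⟩ := mult i₀ hi₀
      have e : τ * τ' * det3 (c' i) (c' i₀) (c j) = 0 := by
        have : det3 (τ • c' i) (τ' • c' i₀) (c j) = 0 := by
          rw [← hτ, ← hτ']; simp [det3]; ring
        rw [← this]; simp [det3]; ring
      simp [hτ0, hτ0', N1b _ _ _ hi] at e
    · push Not at hJ
      refine hX (one_support Y X c c' ζ P (fun j i => s i j) δy δx j₀ hδy (fun j i => hs i j)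
        ?_ ?_ ?_ hj₀ hJ hζ ?_ ?_ ?_ ?_)
      · intro j i i' hii
        have := N1b i i' j hii
        contrapose! this
        rw [← this]; simp [det3]; ring
      · intro j i
        rw [det3_swap12]; exact neg_ne_zero.2 (N2a i j)
      · intro x hx
        refine HM j₀ x fun j' => ?_
        rw [← neg_eq_zero, ← Finset.sum_neg_distrib, ← hx j']
        refine Finset.sum_congr rfl fun i _ => ?_
        rw [det3_swap12 (c' i)]; ring
      · intro j i
        rw [det3_swap12 (c' i)]; linear_combination -hA i j
      · rw [Finset.sum_comm, ← neg_eq_zero, ← hW]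
        simp only [← Finset.sum_neg_distrib]
        refine Finset.sum_congr rfl fun i _ => Finset.sum_congr rfl fun j _ => ?_
        rw [det3_swap12 (c' i)]; ring
      · intro i'
        rw [Finset.sum_comm (γ := Fin 4), ← neg_eq_zero, ← hM i', neg_add]
        simp only [← Finset.sum_neg_distrib]
        congr 1
        · refine Finset.sum_congr rfl fun j _ => ?_
          rw [det3_swap12 (c' i')]; ring
        · refine Finset.sum_congr rfl fun i _ => Finset.sum_congr rfl fun j _ => ?_
          rw [det3_swap12 (c' i)]; ring
      · intro j'
        rw [Finset.sum_comm (γ := Fin 4), ← neg_eq_zero, ← hL j', neg_add]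
        simp only [← Finset.sum_neg_distrib]
        congr 1
        · refine Finset.sum_congr rfl fun i _ => ?_
          rw [det3_swap12 (c' i)]; ring
        · refine Finset.sum_congr rfl fun i _ => Finset.sum_congr rfl fun j _ => ?_
          rw [det3_swap12 (c' i)]; ring
  · push Not at hI
    exact hY (one_support X Y c' c ζ P s δx δy i₀ hδx hs N1a N2a (HL i₀) hi₀ hI hζ hA hW hL hM)

end BaseLocus

/-! ### The linear system and the Bertini argument -/

section DatLemmas
open Matrix
namespace Dat
variable {ι : Type*} [Fintype ι]

section ring
variable {S : Type*} [CommRing S] (D : Dat ι S)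

lemma x_add (q v : ι → S) : D.x (q + v) = D.x q + D.x v := mulVec_add _ _ _
lemma y_add (q v : ι → S) : D.y (q + v) = D.y q + D.y v := mulVec_add _ _ _
lemma z_add (q v : ι → S) : D.z (q + v) = D.z q + D.z v := mulVec_add _ _ _
lemma x_smul (r : S) (v : ι → S) : D.x (r • v) = r • D.x v := mulVec_smul _ _ _
lemma y_smul (r : S) (v : ι → S) : D.y (r • v) = r • D.y v := mulVec_smul _ _ _
lemma z_smul (r : S) (v : ι → S) : D.z (r • v) = r • D.z v := mulVec_smul _ _ _

lemma d_add (i j) (q v : ι → S) : D.d i j (q + v) = D.d i j q + D.d i j v := by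
  simp [d, z_add, det3]; ring
lemma d_smul (i j) (r : S) (v : ι → S) : D.d i j (r • v) = r * D.d i j v := by
  simp [d, z_smul, det3]; ring
lemma d_of_z {i j} {q : ι → S} (h : D.z q = 0) : D.d i j q = 0 := by simp [d, h, det3]

lemma crs_dot (a b c : Fin 3 → S) : ∑ k, crs a b k * c k = det3 a b c := by
  simp [crs, det3, Fin.sum_univ_three]; ring

lemma psi_self (s) (q : ι → S) : D.psi s q q = 3 * D.cub s q := by
  simp only [psi, cub, Finset.mul_sum]
  refine Finset.sum_congr rfl fun i _ => Finset.sum_congr rfl fun j _ => by ring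

lemma cub_smul (r : S) (s) (q : ι → S) : D.cub (fun i j => r * s i j) q = r * D.cub s q := by
  simp only [cub, Finset.mul_sum]
  refine Finset.sum_congr rfl fun i _ => Finset.sum_congr rfl fun j _ => by ring

lemma psi_smul (r : S) (s) (q v : ι → S) :
    D.psi (fun i j => r * s i j) q v = r * D.psi s q v := by
  simp only [psi, Finset.mul_sum]
  refine Finset.sum_congr rfl fun i _ => Finset.sum_congr rfl fun j _ => by ring

/-- At points of `N` the differential of the cubic is governed by `row`. -/
lemma psi_of_z (s) {p v : ι → S} (h : D.z p = 0) :
    D.psi s p v = ∑ k, D.row p s k * D.z v k := by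
  simp only [psi, row, d_of_z D h, Finset.sum_mul]
  rw [Finset.sum_comm]
  simp only [Finset.sum_comm (s := (Finset.univ : Finset (Fin 3)))]
  rw [Finset.sum_comm]
  refine Finset.sum_congr rfl fun i _ => Finset.sum_congr rfl fun j _ => ?_
  rw [d, ← crs_dot, Finset.mul_sum, mul_zero, mul_zero, zero_add, zero_add, Finset.mul_sum]
  refine Finset.sum_congr rfl fun k _ => by ring

lemma row_sub_smul (p : ι → S) (s s') (r : S) :
    D.row p (fun i j => s i j - r * s' i j) = D.row p s - r • D.row p s' := by
  funext k
  simp only [row, Pi.sub_apply, Pi.smul_apply, smul_eq_mul, Finset.mul_sum,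
    ← Finset.sum_sub_distrib]
  refine Finset.sum_congr rfl fun i _ => Finset.sum_congr rfl fun j _ => by ring

lemma rowD_comb (p : ι → S) (κ : Fin 3 → S) (v : Fin 3 → ι → S) (s) :
    D.rowD p (∑ k, κ k • v k) s = ∑ k, κ k • D.rowD p (v k) s := by
  funext k
  simp only [Fin.sum_univ_three, rowD, x_add, y_add, x_smul, y_smul, Pi.add_apply, Pi.smul_apply,
    smul_eq_mul, Finset.mul_sum, ← Finset.sum_add_distrib]
  refine Finset.sum_congr rfl fun i _ => Finset.sum_congr rfl fun j _ => by ring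

lemma E_mulVec (s : Fin 4 → Fin 4 → S) (r) :
    (D.E *ᵥ fun c => s c.1 c.2) r = match eqv16 r with
      | none => s 0 0
      | some (a, k) => D.row (D.p a) s k := by
  simp only [mulVec, dotProduct, E, Matrix.of_apply]
  rcases eqv16 r with _ | ⟨a, k⟩
  · simp
  · simp only [row, Fintype.sum_prod_type]
    refine Finset.sum_congr rfl fun i _ => Finset.sum_congr rfl fun j _ => by ring

lemma E_sol : (D.E *ᵥ fun c => D.sol c.1 c.2) = Pi.single (eqv16.symm none) D.E.det := by
  have h := Matrix.mul_adjugate D.E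
  funext r
  have := congrFun (congrFun h r) (eqv16.symm none)
  simp only [Matrix.mul_apply, Matrix.smul_apply, Matrix.one_apply] at this
  simpa [mulVec, dotProduct, sol, Pi.single_apply] using this

lemma row_sol (a) : D.row (D.p a) D.sol = 0 := by
  funext k
  have h1 := D.E_mulVec D.sol (eqv16.symm (some (a, k)))
  rw [E_sol] at h1
  simpa [Pi.single_apply] using h1.symm

lemma sol_zero : D.sol 0 0 = D.E.det := by
  have h1 := D.E_mulVec D.sol (eqv16.symm none)
  rw [E_sol] at h1
  simpa using h1.symm

end ring

section field
variable {K : Type*} [Field K] (D : Dat ι K)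

/-- The relations between the forms and the points that hold by construction. -/
structure Std (δx δy : K) : Prop where
  hδx : δx ≠ 0
  hδy : δy ≠ 0
  xm : ∀ i j, D.x (D.m j) i = if i = j then δx else 0
  xl : ∀ j, D.x (D.l j) = 0
  yl : ∀ i j, D.y (D.l j) i = if i = j then δy else 0
  ym : ∀ j, D.y (D.m j) = 0
  xw1 : D.x D.w1 = 0
  yw1 : D.y D.w1 = 0
  xw2 : D.x D.w2 = 0
  yw2 : D.y D.w2 = 0
  zp : ∀ a, D.z (D.p a) = 0
  zν : ∀ k, D.z (D.ν k) = 0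

/-- The genericity conditions in the form in which they are used. -/
structure Nice (b : Prop) : Prop where
  N1a : ∀ i j j', j ≠ j' → det3 (D.cM i) (D.cL j) (D.cL j') ≠ 0
  N1b : ∀ i i' j, i ≠ i' → det3 (D.cM i) (D.cM i') (D.cL j) ≠ 0
  N2a : ∀ i j, det3 (D.cM i) (D.cL j) D.P ≠ 0
  N2b : ∀ i i', i ≠ i' → det3 (D.cM i) (D.cM i') D.P ≠ 0
  N2c : ∀ j j', j ≠ j' → det3 (D.cL j) (D.cL j') D.P ≠ 0
  N3 : b → (∀ j, det3 (D.cL j) D.P D.Q ≠ 0) ∧ ∀ i, det3 (D.cM i) D.P D.Q ≠ 0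
  detE : D.E.det ≠ 0
  hs : ∀ i j, D.sol i j ≠ 0
  hν : ∀ a, det3 (D.rowD (D.p a) (D.ν 0) D.sol) (D.rowD (D.p a) (D.ν 1) D.sol)
    (D.rowD (D.p a) (D.ν 2) D.sol) ≠ 0
  hHL : ∀ i, (D.HL i).det ≠ 0
  hHM : ∀ j, (D.HM j).det ≠ 0

lemma nice_iff (b : Prop) [Decidable b] : D.Nice b ↔ D.good b ≠ 0 := by
  have e1 : ∀ (p : Prop) [Decidable p] (a : K), (if p then 1 else a) ≠ 0 ↔ (¬p → a ≠ 0) := by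
    intro p _ a; by_cases h : p <;> simp [h]
  have e2 : ∀ (a : K), (if b then a else 1) ≠ 0 ↔ (b → a ≠ 0) := by
    intro a; by_cases h : b <;> simp [h]
  simp only [good, ne_eq, mul_eq_zero, not_or, Finset.prod_eq_zero_iff, Finset.mem_univ, true_and,
    not_exists]
  simp only [← ne_eq, e1, e2, mul_ne_zero_iff, Finset.prod_ne_zero_iff, Finset.mem_univ,
    true_implies]
  constructor
  · rintro ⟨a1, a2, a3, a4, a5, a6, a7, a8, a9, a10, a11⟩
    exact ⟨⟨⟨⟨⟨⟨⟨⟨⟨⟨a1, a2⟩, a3⟩, a4⟩, a5⟩, a6⟩, a7⟩, a8⟩, a9⟩, a10⟩, a11⟩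
  · rintro ⟨⟨⟨⟨⟨⟨⟨⟨⟨⟨a1, a2⟩, a3⟩, a4⟩, a5⟩, a6⟩, a7⟩, a8⟩, a9⟩, a10⟩, a11⟩
    exact ⟨a1, a2, a3, a4, a5, a6, a7, a8, a9, a10, a11⟩

variable {D} {b : Prop} {δx δy : K}

/-- The cubics singular at the points `p a` form a line. -/
lemma Nice.ker (hD : D.Nice b) (s : Fin 4 → Fin 4 → K) (h : ∀ a, D.row (D.p a) s = 0) :
    ∃ κ : K, ∀ i j, s i j = κ * D.sol i j := by
  set κ := s 0 0 / D.sol 0 0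
  refine ⟨κ, ?_⟩
  have h0 : (fun c : Fin 4 × Fin 4 => s c.1 c.2 - κ * D.sol c.1 c.2) = 0 := by
    by_contra hne
    refine hD.detE (Matrix.exists_mulVec_eq_zero_iff.1 ⟨_, hne, ?_⟩)
    funext r
    rw [D.E_mulVec (fun i j => s i j - κ * D.sol i j)]
    rcases eqv16 r with _ | ⟨a, k⟩
    · simp [κ, div_mul_cancel₀ _ (hD.hs 0 0)]
    · simp [row_sub_smul, h, row_sol]
  intro i j
  have := congrFun h0 (i, j)
  exact sub_eq_zero.1 this

lemma Std.psi_l (hS : D.Std δx δy) (s) (q : ι → K) (j') : D.psi s q (D.l j') =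
    ∑ i, s i j' * (D.x q i * δy * D.d i j' q) +
      ∑ i, ∑ j, s i j * (D.x q i * D.y q j * D.d i j (D.l j')) := by
  simp only [psi, hS.xl, hS.yl, Pi.zero_apply, zero_mul, zero_add, mul_add, Finset.sum_add_distrib]
  congr 1
  refine Finset.sum_congr rfl fun i _ => ?_
  rw [Finset.sum_eq_single j' (fun j _ hj => by simp [hj]) (by simp)]
  simp

lemma Std.psi_m (hS : D.Std δx δy) (s) (q : ι → K) (i') : D.psi s q (D.m i') =
    ∑ j, s i' j * (δx * D.y q j * D.d i' j q) +
      ∑ i, ∑ j, s i j * (D.x q i * D.y q j * D.d i j (D.m i')) := by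
  simp only [psi, hS.xm, hS.ym, Pi.zero_apply, mul_zero, zero_mul, add_zero, mul_add,
    Finset.sum_add_distrib]
  congr 1
  rw [Finset.sum_eq_single i' (fun j _ hj => by simp [hj]) (by simp)]
  simp

/-- A singular point of the cubic lying in the base locus of the sixteen cubics lies in one of the
three subspaces. -/
lemma base_locus (hS : D.Std δx δy) (hD : D.Nice b) (q : ι → K)
    (hq : ∀ v, D.psi D.sol q v = 0) (hb : ∀ i j, D.x q i * D.y q j * D.d i j q = 0) :
    D.x q = 0 ∨ D.y q = 0 ∨ D.z q = 0 := by
  refine base_locus_aux (D.x q) (D.y q) D.cM D.cL (D.z q) D.P D.sol δx δy hS.hδx hS.hδy hD.hs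
    hD.N1a hD.N1b hD.N2a ?_ ?_ hb ?_ ?_ ?_
  · intro i y hy
    by_contra hne
    exact hD.hHL i (Matrix.exists_mulVec_eq_zero_iff.1 ⟨y, hne, funext hy⟩)
  · intro i y hy
    by_contra hne
    exact hD.hHM i (Matrix.exists_mulVec_eq_zero_iff.1 ⟨y, hne, funext hy⟩)
  · have := hq D.w1
    simp only [psi, hS.xw1, hS.yw1, Pi.zero_apply, zero_mul, mul_zero, zero_add] at this
    exact this
  · intro j'
    rw [← hq (D.l j'), hS.psi_l]; rfl
  · intro j'
    rw [← hq (D.m j'), hS.psi_m]; rfl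

/-- Deforming the points of `N` moves the unique cubic in all directions of the sixteen-dimensional
space, hence its singular points lie in the base locus. The deformations are given by derivations
of the base field that kill all data except the points of `N`, which they move along the
directions `ν`. -/
lemma bertini [CharZero K] (hS : D.Std δx δy) (hD : D.Nice b)
    (hder : ∀ κ : Fin 5 → Fin 3 → K, ∃ d : Derivation ℤ K K, (∀ i k, d (D.X i k) = 0) ∧
      (∀ i k, d (D.Y i k) = 0) ∧ (∀ i k, d (D.Z i k) = 0) ∧ (∀ i k, d (D.m i k) = 0) ∧
      (∀ i k, d (D.l i k) = 0) ∧ ∀ a, d ∘ D.p a = ∑ k, κ a k • D.ν k)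
    (q : ι → K) (hq : ∀ v, D.psi D.sol q v = 0) :
    D.x q = 0 ∨ D.y q = 0 ∨ D.z q = 0 := by
  have hc : D.cub D.sol q = 0 := by
    have := hq q
    rw [psi_self] at this
    simpa using this
  refine base_locus hS hD q hq ?_
  have key : ∀ s : Fin 4 → Fin 4 → K, D.cub s q = 0 := by
    intro s
    have : ∀ a, ∃ κ : Fin 3 → K, ∑ k, κ k • D.rowD (D.p a) (D.ν k) D.sol = -D.row (D.p a) s := by
      intro a
      obtain ⟨α, β, γ, h⟩ : ∃ α β γ : K, -D.row (D.p a) s = α • D.rowD (D.p a) (D.ν 0) D.sol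
          - β • D.rowD (D.p a) (D.ν 1) D.sol + γ • D.rowD (D.p a) (D.ν 2) D.sol :=
        ⟨_, _, _, det3_comb _ _ _ (-D.row (D.p a) s) (hD.hν a)⟩
      refine ⟨![α, -β, γ], ?_⟩
      rw [h, Fin.sum_univ_three]
      simp [sub_eq_add_neg]
    choose κ hκ using this
    obtain ⟨d, dX, dY, dZ, dm, dl, dp⟩ := hder κ
    have hx : ∀ v i, d (D.x v i) = D.x (d ∘ v) i := fun v i => by
      simp [x, mulVec, dotProduct, map_sum, Derivation.leibniz, dX]
    have hy : ∀ v i, d (D.y v i) = D.y (d ∘ v) i := fun v i => by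
      simp [y, mulVec, dotProduct, map_sum, Derivation.leibniz, dY]
    have hz : ∀ v i, d (D.z v i) = D.z (d ∘ v) i := fun v i => by
      simp [z, mulVec, dotProduct, map_sum, Derivation.leibniz, dZ]
    have hcM : ∀ i k, d (D.cM i k) = 0 := fun i k => by
      rw [cM, hz, show d ∘ D.m i = 0 from funext (dm i)]; simp [z]
    have hcL : ∀ i k, d (D.cL i k) = 0 := fun i k => by
      rw [cL, hz, show d ∘ D.l i = 0 from funext (dl i)]; simp [z]
    have hcr : ∀ i j k, d (crs (D.cM i) (D.cL j) k) = 0 := fun i j k => by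
      fin_cases k <;> simp [crs, Derivation.leibniz, hcM, hcL]
    have hd : ∀ i j v, d (D.d i j v) = D.d i j (d ∘ v) := fun i j v => by
      rw [Dat.d, Dat.d, ← crs_dot, ← crs_dot, map_sum]
      simp [Derivation.leibniz, hcr, hz]
    -- differentiate the equations of the cubic
    have h1 : ∀ a, D.row (D.p a) (fun i j => d (D.sol i j)) = D.row (D.p a) s := by
      intro a
      have h0 : ∀ k, d (D.row (D.p a) D.sol k) = 0 := fun k => by rw [row_sol]; simp
      have h2 : ∀ k, d (D.row (D.p a) D.sol k) = D.row (D.p a) (fun i j => d (D.sol i j)) k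
          + D.rowD (D.p a) (d ∘ D.p a) D.sol k := by
        intro k
        simp only [row, rowD, map_sum, Derivation.leibniz, hcr, hx, hy, smul_eq_mul,
          ← Finset.sum_add_distrib]
        refine Finset.sum_congr rfl fun i _ => Finset.sum_congr rfl fun j _ => by ring
      funext k
      have h3 := congrFun (hκ a) k
      rw [← rowD_comb, ← dp] at h3
      have h4 := h2 k
      rw [h0, h3, Pi.neg_apply] at h4
      linear_combination -h4
    obtain ⟨r, hr⟩ := hD.ker (fun i j => d (D.sol i j) - 1 * s i j) (fun a => by
      rw [row_sub_smul, h1]; simp)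
    have h5 : D.cub (fun i j => d (D.sol i j)) q = 0 := by
      have h0 : d (D.cub D.sol q) = 0 := by rw [hc, map_zero]
      have h2 : d (D.cub D.sol q) = D.cub (fun i j => d (D.sol i j)) q
          + D.psi D.sol q (d ∘ q) := by
        simp only [cub, psi, map_sum, Derivation.leibniz, hd, hx, hy, smul_eq_mul,
          ← Finset.sum_add_distrib]
        refine Finset.sum_congr rfl fun i _ => Finset.sum_congr rfl fun j _ => by ring
      rw [hq, h0] at h2
      simpa using h2.symm
    have h6 : D.cub s q = D.cub (fun i j => d (D.sol i j)) q - r * D.cub D.sol q := by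
      simp only [cub, Finset.mul_sum, ← Finset.sum_sub_distrib]
      refine Finset.sum_congr rfl fun i _ => Finset.sum_congr rfl fun j _ => ?_
      linear_combination (-(D.x q i * D.y q j * D.d i j q)) * hr i j
    rw [h6, h5, hc]; simp
  intro i j
  have := key (fun i' j' => if i' = i ∧ j' = j then 1 else 0)
  rw [cub, Finset.sum_eq_single i (fun i' _ hi => by simp [hi]) (by simp),
    Finset.sum_eq_single j (fun j' _ hj => by simp [hj]) (by simp)] at this
  simpa using this

end field
end Dat
end DatLemmas

/-! ### The dimension of the space of cubics -/

section Dimension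
open Matrix

lemma eval_linForm {n : ℕ} (a q : Fin (n + 1) → ℂ) : eval q (linForm a) = a ⬝ᵥ q := by
  simp [linForm, dotProduct]

lemma pderiv_linForm {n : ℕ} (a : Fin (n + 1) → ℂ) (k) : pderiv k (linForm a) = C (a k) := by
  simp [linForm, pderiv_X, Pi.single_apply, Finset.sum_ite_eq']

lemma linForm_hom {n : ℕ} (a : Fin (n + 1) → ℂ) : (linForm a).IsHomogeneous 1 :=
  IsHomogeneous.sum _ _ _ fun i _ => by
    simpa using (isHomogeneous_C (Fin (n + 1)) (a i)).mul (isHomogeneous_X ℂ i)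

lemma mem_singSpace {n d : ℕ} {S V : Set (Fin (n + 1) → ℂ)} {f : MvPolynomial (Fin (n + 1)) ℂ} :
    f ∈ SingSpace n d S V ↔ f.IsHomogeneous d ∧ (∀ v ∈ V, eval v f = 0) ∧
      ∀ p ∈ S, ∀ i, eval p (pderiv i f) = 0 := by
  simp [SingSpace, evalAt, evalPDeriv, Submodule.mem_iInf, and_assoc, mem_homogeneousSubmodule,
    aeval_eq_eval]

namespace Dat
variable {n : ℕ} (D : Dat (Fin (n + 1)) ℂ)

/-- The coefficient vector of the linear form `d i j`. -/
noncomputable def dvec (i j : Fin 4) : Fin (n + 1) → ℂ :=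
  fun k => ∑ r, crs (D.cM i) (D.cL j) r * D.Z r k

lemma dvec_dot (i j) (q : Fin (n + 1) → ℂ) : D.dvec i j ⬝ᵥ q = D.d i j q := by
  simp only [dvec, dotProduct, d, ← crs_dot, z, mulVec, Finset.sum_mul, Finset.mul_sum]
  rw [Finset.sum_comm]
  simp only [mul_assoc]

/-- The cubic `cub s` as a polynomial. -/
noncomputable def poly (s : Fin 4 → Fin 4 → ℂ) : MvPolynomial (Fin (n + 1)) ℂ :=
  ∑ i, ∑ j, C (s i j) * (linForm (D.X i) * linForm (D.Y j) * linForm (D.dvec i j))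

lemma eval_poly (s) (q) : eval q (D.poly s) = D.cub s q := by
  simp only [poly, map_sum, map_mul, eval_C, eval_linForm, dvec_dot]; rfl

lemma poly_hom (s) : (D.poly s).IsHomogeneous 3 :=
  IsHomogeneous.sum _ _ _ fun i _ => IsHomogeneous.sum _ _ _ fun j _ => by
    simpa using (isHomogeneous_C (Fin (n + 1)) (s i j)).mul
      (((linForm_hom (D.X i)).mul (linForm_hom (D.Y j))).mul (linForm_hom (D.dvec i j)))

lemma deriv_poly (s) (q v) : ∑ k, v k * eval q (pderiv k (D.poly s)) = D.psi s q v := by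
  have h : ∀ k, v k * eval q (pderiv k (D.poly s)) = ∑ i, ∑ j,
      s i j * ((D.X i k * v k) * D.y q j * D.d i j q + D.x q i * (D.Y j k * v k) * D.d i j q
        + D.x q i * D.y q j * (D.dvec i j k * v k)) := by
    intro k
    simp only [poly, map_sum, pderiv_C, pderiv_mul, pderiv_linForm, map_zero, map_mul, map_add, eval_C,
      eval_linForm, dvec_dot, Finset.mul_sum]
    refine Finset.sum_congr rfl fun i _ => Finset.sum_congr rfl fun j _ => ?_
    rw [show D.X i ⬝ᵥ q = D.x q i from rfl, show D.Y j ⬝ᵥ q = D.y q j from rfl]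
    ring
  simp only [h]
  rw [Finset.sum_comm]
  refine Finset.sum_congr rfl fun i _ => ?_
  rw [Finset.sum_comm]
  refine Finset.sum_congr rfl fun j _ => ?_
  rw [← dvec_dot (q := v), show D.x v i = ∑ k, D.X i k * v k from rfl,
    show D.y v j = ∑ k, D.Y j k * v k from rfl, dotProduct, ← Finset.mul_sum]
  simp only [Finset.sum_add_distrib, Finset.sum_mul, Finset.mul_sum]

variable {D} {b : Prop} {δx δy : ℂ}

/-- All cubics that contain the three subspaces and are singular at the points `l j` and `m i` are
combinations of the sixteen cubics `x i * y j * d i j`. -/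
lemma eq_poly (hS : D.Std δx δy) (hD : D.Nice b)
    (hb : b ∨ ∀ w, D.x w = 0 → D.y w = 0 → ∃ κ : ℂ, w = κ • D.w1)
    (f : MvPolynomial (Fin (n + 1)) ℂ) (hf : f.IsHomogeneous 3)
    (hU : ∀ v, D.x v = 0 ∨ D.y v = 0 ∨ D.z v = 0 → eval v f = 0)
    (hl : ∀ j i, eval (D.l j) (pderiv i f) = 0) (hm : ∀ j i, eval (D.m j) (pderiv i f) = 0) :
    ∃ s, f = D.poly s := by
  have hd : ∀ i j, D.d i j D.w1 ≠ 0 := hD.N2a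
  set s : Fin 4 → Fin 4 → ℂ := fun i j =>
    eval (D.m i + D.l j + D.w1) f / (δx * δy * D.d i j D.w1) with hs
  refine ⟨s, ?_⟩
  set g := f - D.poly s with hg
  have gU : ∀ v, D.x v = 0 ∨ D.y v = 0 ∨ D.z v = 0 → eval v g = 0 := by
    intro v hv
    rw [hg, map_sub, hU v hv, eval_poly, zero_sub, neg_eq_zero]
    rcases hv with h | h | h
    · simp [cub, h]
    · simp [cub, h]
    · simp [cub, d_of_z D h]
  obtain ⟨Φ, s12, s23, hΦ, hΦ'⟩ := exists_tri g (hf.sub (D.poly_hom s))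
  have sing : ∀ u, (∀ i, eval u (pderiv i f) = 0) → (∀ v, D.psi s u v = 0) → ∀ v, Φ u u v = 0 := by
    intro u h1 h2 v
    have := hΦ' u v
    simp only [hg, map_sub, h1, zero_sub, mul_neg, Finset.sum_neg_distrib, deriv_poly, h2] at this
    simpa using this.symm
  have dl : ∀ i j, D.d i j (D.l j) = 0 := fun i j => det3_self23 _ _
  have dm : ∀ i j, D.d i j (D.m i) = 0 := fun i j => det3_self13 _ _
  have sl : ∀ j v, Φ (D.l j) (D.l j) v = 0 := fun j => sing _ (hl j) fun v => by
    simp only [psi, hS.xl, hS.yl, Pi.zero_apply, zero_mul, add_zero]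
    refine Finset.sum_eq_zero fun i _ => Finset.sum_eq_zero fun j' _ => ?_
    by_cases h : j' = j
    · subst h; simp [dl]
    · simp [h]
  have sm : ∀ j v, Φ (D.m j) (D.m j) v = 0 := fun j => sing _ (hm j) fun v => by
    simp only [psi, hS.xm, hS.ym, Pi.zero_apply, zero_mul, mul_zero, add_zero, zero_add]
    refine Finset.sum_eq_zero fun i _ => Finset.sum_eq_zero fun j' _ => ?_
    by_cases h : i = j
    · subst h; simp [dm]
    · simp [h]
  have hw0 : ∀ i j, eval (D.m i + D.l j + D.w1) g = 0 := by
    intro i j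
    have hz : D.d i j (D.m i + D.l j + D.w1) = D.d i j D.w1 := by
      rw [d_add, d_add, dm, dl]; ring
    rw [hg, map_sub, eval_poly, cub, Finset.sum_eq_single i, Finset.sum_eq_single j, hz]
    · simp only [x_add, y_add, hS.xl, hS.ym, hS.xw1, hS.yw1, Pi.add_apply, hS.xm, hS.yl,
        Pi.zero_apply, if_true, add_zero, zero_add, hs]
      have := hd i j
      have := hS.hδx
      have := hS.hδy
      field_simp
      ring
    · intro j' _ h
      simp [y_add, hS.ym, hS.yw1, hS.yl, h]
    · simp
    · intro i' _ h
      simp [x_add, hS.xl, hS.xw1, hS.xm, h]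
    · simp
  set L := LinearMap.ker (Matrix.mulVecLin D.X) with hLdef
  set M := LinearMap.ker (Matrix.mulVecLin D.Y) with hMdef
  have memL : ∀ v, v ∈ L ↔ D.x v = 0 := fun v => by simp [hLdef, x]
  have memM : ∀ v, v ∈ M ↔ D.y v = 0 := fun v => by simp [hMdef, y]
  have hL : ∀ v ∈ L, Φ v v v = 0 := fun v hv => by
    rw [← hΦ]; exact gU v (Or.inl ((memL v).1 hv))
  have hM : ∀ v ∈ M, Φ v v v = 0 := fun v hv => by
    rw [← hΦ]; exact gU v (Or.inr (Or.inl ((memM v).1 hv)))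
  have hmM : ∀ i, D.m i ∈ M := fun i => (memM _).2 (hS.ym i)
  have hlL : ∀ i, D.l i ∈ L := fun i => (memL _).2 (hS.xl i)
  have w1L := (memL _).2 hS.xw1
  have w1M := (memM _).2 hS.yw1
  have hw : ∀ i j, Φ (D.m i) (D.l j) D.w1 = 0 := by
    intro i j
    have h := hw0 i j
    rw [hΦ] at h
    simp only [map_add, LinearMap.add_apply, sl, sm, s12 (D.l j) (D.m i), s23 (D.l j) _ (D.l j),
      s12 D.w1, s23 _ D.w1] at h
    have e1 := hL D.w1 w1L
    have e2 := polar_zero Φ s12 s23 L hL (hlL j) w1L w1L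
    have e3 := polar_zero Φ s12 s23 M hM (hmM i) w1M w1M
    have e4 := s23 (D.m i) (D.l j) (D.m i)
    have e5 := s23 (D.m i) (D.l j) (D.l j)
    have e6 : Φ (D.m i) (D.l j) (D.l j) = 0 := by rw [s12, s23]; exact sl _ _
    rw [sm] at e4
    simp only [e1, e2, e3, e4, e6] at h
    ring_nf at h
    simpa using h
  have gz : ∀ v, eval v g = 0 := by
    intro v
    rw [hΦ]
    refine tlemma Φ s12 s23 L M (Matrix.mulVecLin D.Z) D.m D.l D.w1 D.w2 hL hM ?_ hmM hlL sm sl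
      w1L w1M ((memL _).2 hS.xw2) ((memM _).2 hS.yw2) ?_ hD.N2a hD.N2b hD.N2c ?_ hw v
    · intro v hv
      rw [← hΦ]; exact gU v (Or.inr (Or.inr hv))
    · intro q
      refine ⟨fun i => D.x q i / δx, fun j => D.y q j / δy, q - (∑ i, (D.x q i / δx) • D.m i
        + ∑ j, (D.y q j / δy) • D.l j), ?_, ?_, by abel⟩
      · rw [hLdef, LinearMap.mem_ker]
        simp only [map_sub, map_add, map_sum, map_smul, Matrix.mulVecLin_apply]
        rw [sub_eq_zero]
        funext i
        have e1 : ∀ j, D.X *ᵥ D.l j = 0 := hS.xl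
        have e2 : ∀ j, (D.X *ᵥ D.m j) i = if i = j then δx else 0 := fun j => hS.xm i j
        simp [e1, e2, Finset.sum_apply, div_mul_cancel₀ _ hS.hδx]
        rfl
      · rw [hMdef, LinearMap.mem_ker]
        simp only [map_sub, map_add, map_sum, map_smul, Matrix.mulVecLin_apply]
        rw [sub_eq_zero]
        funext i
        have e1 : ∀ j, D.Y *ᵥ D.m j = 0 := hS.ym
        have e2 : ∀ j, (D.Y *ᵥ D.l j) i = if i = j then δy else 0 := fun j => hS.yl i j
        simp [e1, e2, Finset.sum_apply, div_mul_cancel₀ _ hS.hδy]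
        rfl
    · rcases hb with hb | hb
      · exact Or.inr (hD.N3 hb)
      · exact Or.inl fun w h1 h2 => hb w ((memL w).1 h1) ((memM w).1 h2)
  have : g = 0 := MvPolynomial.funext fun v => by rw [gz, map_zero]
  exact sub_eq_zero.1 this

/-- The space of cubics is a line, and at every singular point of one of its nonzero members the
differential of the cubic with coefficients `sol` vanishes. -/
theorem dim_one (hS : D.Std δx δy) (hD : D.Nice b)
    (hb : b ∨ ∀ w, D.x w = 0 → D.y w = 0 → ∃ κ : ℂ, w = κ • D.w1)
    (U T : Set (Fin (n + 1) → ℂ)) (hU : ∀ v, v ∈ U ↔ D.x v = 0 ∨ D.y v = 0 ∨ D.z v = 0)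
    (hT : T = Set.range D.l ∪ Set.range D.m ∪ Set.range D.p) :
    Module.finrank ℂ (SingSpace n 3 T U) = 1 ∧ ∀ f ∈ SingSpace n 3 T U, f ≠ 0 →
      ∀ q, SingularAt f q → ∀ v, D.psi D.sol q v = 0 := by
  have dl : ∀ i j, D.d i j (D.l j) = 0 := fun i j => det3_self23 _ _
  have dm : ∀ i j, D.d i j (D.m i) = 0 := fun i j => det3_self13 _ _
  have hex : ∀ f ∈ SingSpace n 3 T U, ∃ κ : ℂ, f = κ • D.poly D.sol := by
    intro f hf
    obtain ⟨hf1, hf2, hf3⟩ := mem_singSpace.1 hf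
    subst hT
    obtain ⟨s, rfl⟩ := eq_poly hS hD hb f hf1 (fun v hv => hf2 v ((hU v).2 hv))
      (fun j => hf3 _ (by simp)) (fun j => hf3 _ (by simp))
    obtain ⟨κ, hκ⟩ := hD.ker s (by
      intro a
      have h : ∀ v, ∑ k, D.row (D.p a) s k * D.z v k = 0 := fun v => by
        rw [← psi_of_z D s (hS.zp a), ← deriv_poly]
        simp [hf3 (D.p a) (by simp)]
      -- a vector orthogonal to a basis vanishes
      have hmat : (Matrix.of ![D.cM 0, D.cL 0, D.cL 1]) *ᵥ D.row (D.p a) s = 0 := by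
        have h1 := h (D.m 0)
        have h2 := h (D.l 0)
        have h3 := h (D.l 1)
        funext k
        fin_cases k
        · simpa [mulVec, dotProduct, mul_comm, cM, cL] using h1
        · simpa [mulVec, dotProduct, mul_comm, cM, cL] using h2
        · simpa [mulVec, dotProduct, mul_comm, cM, cL] using h3
      by_contra hne
      have := Matrix.exists_mulVec_eq_zero_iff.1 ⟨_, hne, hmat⟩
      refine hD.N1a 0 0 1 (by decide) ?_
      rw [← this, Matrix.det_fin_three]
      simp [det3]; ring)
    refine ⟨κ, ?_⟩
    simp only [poly, hκ, Finset.smul_sum, MvPolynomial.smul_eq_C_mul, C_mul, mul_assoc]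
  have hmem : D.poly D.sol ∈ SingSpace n 3 T U := by
    refine mem_singSpace.2 ⟨D.poly_hom _, fun v hv => ?_, fun p hp i => ?_⟩
    · rw [eval_poly]
      rcases (hU v).1 hv with h | h | h
      · simp [cub, h]
      · simp [cub, h]
      · simp [cub, d_of_z D h]
    · have hp' : ∀ v, D.psi D.sol p v = 0 := by
        intro v
        subst hT
        rcases hp with (⟨j, rfl⟩ | ⟨j, rfl⟩) | ⟨a, rfl⟩
        · simp only [psi, hS.xl, hS.yl, Pi.zero_apply, zero_mul, add_zero]
          refine Finset.sum_eq_zero fun i _ => Finset.sum_eq_zero fun j' _ => ?_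
          by_cases h : j' = j
          · subst h; simp [dl]
          · simp [h]
        · simp only [psi, hS.xm, hS.ym, Pi.zero_apply, zero_mul, mul_zero, add_zero, zero_add]
          refine Finset.sum_eq_zero fun i _ => Finset.sum_eq_zero fun j' _ => ?_
          by_cases h : i = j
          · subst h; simp [dm]
          · simp [h]
        · rw [psi_of_z D _ (hS.zp a), row_sol]; simp
      have := hp' (Pi.single i 1)
      rw [← deriv_poly] at this
      simpa [Pi.single_apply] using this
  have hne : D.poly D.sol ≠ 0 := by
    intro h0
    have h1 := congrArg (eval (D.m 0 + D.l 0 + D.w1)) h0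
    have hz : D.d 0 0 (D.m 0 + D.l 0 + D.w1) = D.d 0 0 D.w1 := by
      rw [d_add, d_add, dm, dl]; ring
    rw [map_zero, eval_poly, cub, Finset.sum_eq_single 0, Finset.sum_eq_single 0, hz] at h1
    · simp only [x_add, y_add, hS.xl, hS.ym, hS.xw1, hS.yw1, Pi.add_apply, hS.xm, hS.yl,
        Pi.zero_apply, if_true, add_zero, zero_add] at h1
      have hd : D.d 0 0 D.w1 ≠ 0 := hD.N2a 0 0
      simp [hD.hs, hS.hδx, hS.hδy, hd] at h1
    · intro j' _ h
      simp [y_add, hS.ym, hS.yw1, hS.yl, h]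
    · simp
    · intro i' _ h
      simp [x_add, hS.xl, hS.xw1, hS.xm, h]
    · simp
  refine ⟨(finrank_eq_one_iff_of_nonzero' ⟨_, hmem⟩ (by simpa [Subtype.ext_iff] using hne)).2 ?_, ?_⟩
  · rintro ⟨f, hf⟩
    obtain ⟨κ, hκ⟩ := hex f hf
    exact ⟨κ, Subtype.ext hκ.symm⟩
  · intro f hf hf0 q hq v
    obtain ⟨κ, rfl⟩ := hex f hf
    have hκ : κ ≠ 0 := by rintro rfl; simp at hf0
    rw [← deriv_poly]
    refine Finset.sum_eq_zero fun k _ => ?_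
    have := hq k
    rw [map_smul, smul_eq_mul, mul_eq_zero, or_iff_right hκ] at this
    have h2 : eval q (pderiv k (D.poly D.sol)) = 0 := by
      rw [← aeval_eq_eval]; exact this
    rw [h2, mul_zero]

end Dat
end Dimension

/-! ### Parametrised configurations -/

noncomputable section RawData
open Matrix

section forms
variable {ι α γ : Type*} [Fintype ι] [DecidableEq ι] [Fintype α] [Fintype γ] [DecidableEq γ]
  {S T : Type*} [CommRing S] [CommRing T]

/-- The square matrix with columns those of `A` followed by the vectors `c`. -/
def sqm (e : ι ≃ α ⊕ γ) (A : Matrix ι α S) (c : γ → ι → S) : Matrix ι ι S :=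
  Matrix.of fun r k => Sum.elim (fun j => A r j) (fun i => c i r) (e k)

/-- Linear forms vanishing on the columns of `A` and dual, up to the factor `(sqm e A c).det`, to
the vectors `c`. They are read off from the adjugate, so that they depend polynomially on
the data. -/
def forms (e : ι ≃ α ⊕ γ) (A : Matrix ι α S) (c : γ → ι → S) : Matrix γ ι S :=
  Matrix.of fun i k => (sqm e A c).adjugate (e.symm (Sum.inr i)) k

lemma forms_mul (e : ι ≃ α ⊕ γ) (A : Matrix ι α S) (c : γ → ι → S) (i : γ) (k : ι) :
    ∑ r, forms e A c i r * sqm e A c r k = if e.symm (Sum.inr i) = k then (sqm e A c).det else 0 := by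
  have := congrFun (congrFun (Matrix.adjugate_mul (sqm e A c)) (e.symm (Sum.inr i))) k
  simpa [Matrix.mul_apply, Matrix.one_apply, forms] using this

lemma forms_A (e : ι ≃ α ⊕ γ) (A : Matrix ι α S) (c : γ → ι → S) (u : α → S) :
    forms e A c *ᵥ (A *ᵥ u) = 0 := by
  have h : forms e A c * A = 0 := by
    ext i j
    have := forms_mul e A c i (e.symm (Sum.inl j))
    simpa [sqm, Matrix.mul_apply] using this
  rw [Matrix.mulVec_mulVec, h, Matrix.zero_mulVec]

lemma forms_c (e : ι ≃ α ⊕ γ) (A : Matrix ι α S) (c : γ → ι → S) (i j : γ) :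
    (forms e A c *ᵥ c j) i = if i = j then (sqm e A c).det else 0 := by
  have := forms_mul e A c i (e.symm (Sum.inr j))
  simpa [sqm, Matrix.mulVec, dotProduct] using this

lemma sqm_mulVec (e : ι ≃ α ⊕ γ) (A : Matrix ι α S) (c : γ → ι → S) (q : ι → S) :
    sqm e A c *ᵥ q = A *ᵥ (fun a => q (e.symm (Sum.inl a))) + ∑ i, q (e.symm (Sum.inr i)) • c i := by
  funext r
  simp only [Matrix.mulVec, dotProduct, Pi.add_apply, Finset.sum_apply, Pi.smul_apply, smul_eq_mul]
  rw [← e.symm.sum_comp, Fintype.sum_sum_type]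
  simp [sqm, mul_comm]

lemma map_sqm (φ : S →+* T) (e : ι ≃ α ⊕ γ) (A : Matrix ι α S) (c : γ → ι → S) :
    (sqm e A c).map φ = sqm e (A.map φ) (fun i => φ ∘ c i) := by
  ext r k
  simp only [sqm, Matrix.map_apply, Matrix.of_apply]
  rcases e k <;> simp

lemma map_forms (φ : S →+* T) (e : ι ≃ α ⊕ γ) (A : Matrix ι α S) (c : γ → ι → S) :
    (forms e A c).map φ = forms e (A.map φ) (fun i => φ ∘ c i) := by
  ext i k
  have := congrFun (congrFun (RingHom.map_adjugate φ (sqm e A c)) (e.symm (Sum.inr i))) k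
  simpa [forms, ← map_sqm] using this

lemma forms_ker {K : Type*} [Field K] (e : ι ≃ α ⊕ γ) (A : Matrix ι α K) (c : γ → ι → K)
    (h : (sqm e A c).det ≠ 0) (q : ι → K) :
    forms e A c *ᵥ q = 0 ↔ q ∈ Set.range A.mulVec := by
  constructor
  · intro hq
    set q' := ((sqm e A c).det)⁻¹ • ((sqm e A c).adjugate *ᵥ q) with hq'
    have h1 : sqm e A c *ᵥ q' = q := by
      rw [hq', Matrix.mulVec_smul, Matrix.mulVec_mulVec, Matrix.mul_adjugate, Matrix.smul_mulVec,
        Matrix.one_mulVec, smul_smul, inv_mul_cancel₀ h, one_smul]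
    have h2 : ∀ i, q' (e.symm (Sum.inr i)) = 0 := by
      intro i
      have : ((sqm e A c).adjugate *ᵥ q) (e.symm (Sum.inr i)) = 0 := congrFun hq i
      simp [hq', this]
    rw [sqm_mulVec] at h1
    simp only [h2, zero_smul, Finset.sum_const_zero, add_zero] at h1
    exact ⟨_, h1⟩
  · rintro ⟨u, rfl⟩
    exact forms_A e A c u

lemma sqm_inj {K : Type*} [Field K] (e : ι ≃ α ⊕ γ) (A : Matrix ι α K) (c : γ → ι → K)
    (h : (sqm e A c).det ≠ 0) : Function.Injective A.mulVec := by
  intro u u' huu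
  by_contra hne
  set q : ι → K := fun k => Sum.elim (u - u') 0 (e k) with hq
  refine h (Matrix.exists_mulVec_eq_zero_iff.1 ⟨q, ?_, ?_⟩)
  · obtain ⟨a, ha⟩ := Function.ne_iff.1 hne
    intro h0
    have := congrFun h0 (e.symm (Sum.inl a))
    simp [hq, sub_eq_zero, ha] at this
  · rw [sqm_mulVec]
    have : (fun a => q (e.symm (Sum.inl a))) = u - u' := by funext a; simp [hq]
    rw [this, Matrix.mulVec_sub, huu]
    simp [hq]

end forms

/-- Fixed combinatorial choices: identifications of the coordinates with columns of the completed
square matrices, two coordinate vectors projected to `L ∩ M`, and three columns of `B`. -/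
structure Ix (ι α β : Type*) where
  eA : ι ≃ α ⊕ Fin 4
  eB : ι ≃ β ⊕ Fin 3
  o1 : ι
  o2 : ι
  k : Fin 3 → β

/-- The parameters of a configuration, over an arbitrary ring. -/
structure Raw (ι α β S : Type*) where
  A0 : Matrix ι α S
  A1 : Matrix ι α S
  B : Matrix ι β S
  u0 : Fin 4 → α → S
  u1 : Fin 4 → α → S
  v : Fin 5 → β → S

namespace Raw
variable {ι α β : Type*} [Fintype ι] [DecidableEq ι] [Fintype α] [Fintype β] [DecidableEq β]
  {S T : Type*} [CommRing S] [CommRing T]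

/-- Transport along a ring homomorphism. -/
def map (t : Raw ι α β S) (φ : S →+* T) : Raw ι α β T where
  A0 := t.A0.map φ
  A1 := t.A1.map φ
  B := t.B.map φ
  u0 i := φ ∘ t.u0 i
  u1 i := φ ∘ t.u1 i
  v i := φ ∘ t.v i

variable (I : Ix ι α β) (t : Raw ι α β S)

/-- The points on `L`. -/
def l (j : Fin 4) : ι → S := t.A0 *ᵥ t.u0 j
/-- The points on `M`. -/
def m (j : Fin 4) : ι → S := t.A1 *ᵥ t.u1 j
/-- The three vectors completing a basis of `N`. -/
def c (j : Fin 3) : ι → S := ![t.m 0, t.m 1, t.l 0] j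

/-- The determinant of `A0` completed by the points `m`. -/
def δx : S := (sqm I.eA t.A0 t.m).det
/-- The determinant of `A1` completed by the points `l`. -/
def δy : S := (sqm I.eA t.A1 t.l).det
/-- The determinant of `B` completed by the vectors `c`. -/
def δz : S := (sqm I.eB t.B t.c).det

/-- The projection to `L ∩ M` along the span of the `m i` and `l j`, scaled by `δx * δy`. -/
def proj (e : ι → S) : ι → S :=
  (t.δx I * t.δy I) • e - t.δy I • ∑ i, (forms I.eA t.A0 t.m *ᵥ e) i • t.m i
    - t.δx I • ∑ j, (forms I.eA t.A1 t.l *ᵥ e) j • t.l j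

/-- The data attached to the parameters. -/
def dat : Dat ι S where
  X := forms I.eA t.A0 t.m
  Y := forms I.eA t.A1 t.l
  Z := forms I.eB t.B t.c
  m := t.m
  l := t.l
  p a := t.B *ᵥ t.v a
  ν k := t.B *ᵥ Pi.single (I.k k) 1
  w1 := t.proj I (Pi.single I.o1 1)
  w2 := t.proj I (Pi.single I.o2 1)

/-- The polynomial whose nonvanishing expresses all explicit genericity conditions. -/
def gen (b : Prop) [Decidable b] : S := t.δx I * t.δy I * t.δz I * (t.dat I).good b

section naturality
variable (φ : S →+* T)

lemma map_l (j) : φ ∘ t.l j = (t.map φ).l j := funext fun _ => RingHom.map_mulVec φ _ _ _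
lemma map_m (j) : φ ∘ t.m j = (t.map φ).m j := funext fun _ => RingHom.map_mulVec φ _ _ _
lemma map_c (j) : φ ∘ t.c j = (t.map φ).c j := by
  fin_cases j
  · exact t.map_m φ 0
  · exact t.map_m φ 1
  · exact t.map_l φ 0

lemma map_X : (forms I.eA t.A0 t.m).map φ = forms I.eA (t.map φ).A0 (t.map φ).m := by
  rw [map_forms]; simp only [map_m]; rfl
lemma map_Y : (forms I.eA t.A1 t.l).map φ = forms I.eA (t.map φ).A1 (t.map φ).l := by
  rw [map_forms]; simp only [map_l]; rfl
lemma map_Z : (forms I.eB t.B t.c).map φ = forms I.eB (t.map φ).B (t.map φ).c := by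
  rw [map_forms]; simp only [map_c]; rfl
lemma map_δx : φ (t.δx I) = (t.map φ).δx I := by
  simp only [δx, RingHom.map_det, RingHom.mapMatrix_apply, map_sqm, map_m]; rfl
lemma map_δy : φ (t.δy I) = (t.map φ).δy I := by
  simp only [δy, RingHom.map_det, RingHom.mapMatrix_apply, map_sqm, map_l]; rfl
lemma map_δz : φ (t.δz I) = (t.map φ).δz I := by
  simp only [δz, RingHom.map_det, RingHom.mapMatrix_apply, map_sqm, map_c]; rfl

lemma map_proj (e : ι → S) : φ ∘ t.proj I e = (t.map φ).proj I (φ ∘ e) := by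
  have hx : ∀ i, φ ((forms I.eA t.A0 t.m *ᵥ e) i)
      = (forms I.eA (t.map φ).A0 (t.map φ).m *ᵥ (φ ∘ e)) i := fun i => by
    rw [RingHom.map_mulVec, ← map_X]
  have hy : ∀ i, φ ((forms I.eA t.A1 t.l *ᵥ e) i)
      = (forms I.eA (t.map φ).A1 (t.map φ).l *ᵥ (φ ∘ e)) i := fun i => by
    rw [RingHom.map_mulVec, ← map_Y]
  have hm : ∀ i k, φ (t.m i k) = (t.map φ).m i k := fun i k => congrFun (t.map_m φ i) k
  have hl : ∀ i k, φ (t.l i k) = (t.map φ).l i k := fun i k => congrFun (t.map_l φ i) k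
  funext k
  simp only [proj, Function.comp_apply, Pi.sub_apply, Pi.smul_apply, Finset.sum_apply, smul_eq_mul,
    map_sub, map_mul, map_sum, map_δx, map_δy, hx, hy, hm, hl]

lemma comp_single (i : ι) : φ ∘ (Pi.single i 1 : ι → S) = Pi.single i 1 := by
  funext k; simp [Pi.single_apply, apply_ite φ]

lemma map_dat : (t.dat I).map φ = (t.map φ).dat I := by
  have h1 : (fun i => φ ∘ (t.dat I).m i) = ((t.map φ).dat I).m := funext (t.map_m φ)
  have h2 : (fun i => φ ∘ (t.dat I).l i) = ((t.map φ).dat I).l := funext (t.map_l φ)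
  have h3 : (fun i => φ ∘ (t.dat I).p i) = ((t.map φ).dat I).p :=
    funext fun i => funext fun _ => RingHom.map_mulVec φ _ _ _
  have h4 : (fun i => φ ∘ (t.dat I).ν i) = ((t.map φ).dat I).ν :=
    funext fun i => funext fun _ => by
      refine (RingHom.map_mulVec φ _ _ _).trans ?_
      congr 2
      funext k; simp [Pi.single_apply, apply_ite φ]
  have h5 : φ ∘ (t.dat I).w1 = ((t.map φ).dat I).w1 := by
    refine (t.map_proj I φ _).trans ?_
    rw [comp_single]; rfl
  have h6 : φ ∘ (t.dat I).w2 = ((t.map φ).dat I).w2 := by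
    refine (t.map_proj I φ _).trans ?_
    rw [comp_single]; rfl
  have h7 : (t.dat I).X.map φ = ((t.map φ).dat I).X := t.map_X I φ
  have h8 : (t.dat I).Y.map φ = ((t.map φ).dat I).Y := t.map_Y I φ
  have h9 : (t.dat I).Z.map φ = ((t.map φ).dat I).Z := t.map_Z I φ
  unfold Dat.map
  rw [h1, h2, h3, h4, h5, h6, h7, h8, h9]

lemma map_gen (b : Prop) [Decidable b] : φ (t.gen I b) = (t.map φ).gen I b := by
  simp only [gen, map_mul, map_δx, map_δy, map_δz, Dat.map_good, map_dat]

end naturality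

section field
variable {K : Type*} [Field K] (t : Raw ι α β K)

lemma x_proj (e : ι → K) : forms I.eA t.A0 t.m *ᵥ t.proj I e = 0 := by
  have e1 : ∀ j, forms I.eA t.A0 t.m *ᵥ t.l j = 0 := fun j => forms_A _ _ _ _
  have e2 : ∀ i j, (forms I.eA t.A0 t.m *ᵥ t.m j) i = if i = j then t.δx I else 0 :=
    fun i j => forms_c _ _ _ _ _
  funext i
  simp only [proj, Matrix.mulVec_sub, Matrix.mulVec_smul, Matrix.mulVec_sum, e1, Pi.sub_apply,
    Pi.smul_apply, Finset.sum_apply, e2, smul_zero, Finset.sum_const_zero, Pi.zero_apply,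
    smul_eq_mul]
  simp
  ring

lemma y_proj (e : ι → K) : forms I.eA t.A1 t.l *ᵥ t.proj I e = 0 := by
  have e1 : ∀ j, forms I.eA t.A1 t.l *ᵥ t.m j = 0 := fun j => forms_A _ _ _ _
  have e2 : ∀ i j, (forms I.eA t.A1 t.l *ᵥ t.l j) i = if i = j then t.δy I else 0 :=
    fun i j => forms_c _ _ _ _ _
  funext i
  simp only [proj, Matrix.mulVec_sub, Matrix.mulVec_smul, Matrix.mulVec_sum, e1, Pi.sub_apply,
    Pi.smul_apply, Finset.sum_apply, e2, smul_zero, Finset.sum_const_zero, Pi.zero_apply,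
    smul_eq_mul]
  simp
  ring

lemma std (hx : t.δx I ≠ 0) (hy : t.δy I ≠ 0) : (t.dat I).Std (t.δx I) (t.δy I) where
  hδx := hx
  hδy := hy
  xm i j := forms_c _ _ _ _ _
  xl j := forms_A _ _ _ _
  yl i j := forms_c _ _ _ _ _
  ym j := forms_A _ _ _ _
  xw1 := t.x_proj I _
  yw1 := t.y_proj I _
  xw2 := t.x_proj I _
  yw2 := t.y_proj I _
  zp a := forms_A _ _ _ _
  zν k := forms_A _ _ _ _

end field
end Raw

/-- When there are only nine coordinates, `L ∩ M` is spanned by `w1`. -/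
lemma Dat.line_of_card {ι : Type*} [Fintype ι] {K : Type*} [Field K] {D : Dat ι K} {b : Prop}
    {δx δy : K} (hS : D.Std δx δy) (hD : D.Nice b) (hc : Fintype.card ι = 9) (w : ι → K)
    (hx : D.x w = 0) (hy : D.y w = 0) : ∃ κ : K, w = κ • D.w1 := by
  set f : (ι → K) →ₗ[K] (Fin 4 → K) × (Fin 4 → K) :=
    (Matrix.mulVecLin D.X).prod (Matrix.mulVecLin D.Y) with hf
  have fk : ∀ v, f v = (D.x v, D.y v) := fun v => rfl
  have hsurj : LinearMap.range f = ⊤ := by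
    rw [LinearMap.range_eq_top]
    rintro ⟨a, c⟩
    refine ⟨∑ i, (a i / δx) • D.m i + ∑ j, (c j / δy) • D.l j, ?_⟩
    have e1 : ∀ i, f (D.m i) = (D.x (D.m i), 0) := fun i => by rw [fk, hS.ym]
    have e2 : ∀ i, f (D.l i) = (0, D.y (D.l i)) := fun i => by rw [fk, hS.xl]
    simp only [map_add, map_sum, map_smul, e1, e2]
    ext i
    · simp [Prod.fst_sum, Finset.sum_apply, hS.xm, div_mul_cancel₀ _ hS.hδx]
    · simp [Prod.snd_sum, Finset.sum_apply, hS.yl, div_mul_cancel₀ _ hS.hδy]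
  have hr := f.finrank_range_add_finrank_ker
  rw [hsurj, finrank_top, Module.finrank_prod, Module.finrank_fintype_fun_eq_card,
    Module.finrank_fintype_fun_eq_card, hc, Fintype.card_fin] at hr
  have hk : Module.finrank K (LinearMap.ker f) = 1 := by omega
  have hw1 : D.w1 ∈ LinearMap.ker f := by
    rw [LinearMap.mem_ker, fk, hS.xw1, hS.yw1]; rfl
  have hne : (⟨D.w1, hw1⟩ : LinearMap.ker f) ≠ 0 := by
    intro h0
    have h1 : D.w1 = 0 := congrArg Subtype.val h0
    refine hD.N2a 0 0 ?_
    simp [Dat.P, h1, Dat.z, det3]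
  obtain ⟨κ, hκ⟩ := (finrank_eq_one_iff_of_nonzero' _ hne).1 hk
    ⟨w, by rw [LinearMap.mem_ker, fk, hx, hy]; rfl⟩
  exact ⟨κ, (congrArg Subtype.val hκ).symm⟩

end RawData

/-! ### Derivations and elimination -/

section Elimination

/-- Derivations of a polynomial ring with values in a separable algebraic extension `L` of its
fraction field extend to `L`. -/
lemma exists_derivation {σ L : Type*} [Field L] [Algebra (MvPolynomial σ ℂ) L]
    [Algebra (FractionRing (MvPolynomial σ ℂ)) L]
    [IsScalarTower (MvPolynomial σ ℂ) (FractionRing (MvPolynomial σ ℂ)) L]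
    [FiniteDimensional (FractionRing (MvPolynomial σ ℂ)) L] (τ : σ → L) :
    ∃ d : Derivation ℤ L L, ∀ s, d (algebraMap (MvPolynomial σ ℂ) L (X s)) = τ s := by
  let _ : Algebra ℂ L := ((algebraMap (MvPolynomial σ ℂ) L).comp (algebraMap ℂ _)).toAlgebra
  have : IsScalarTower ℂ (MvPolynomial σ ℂ) L := IsScalarTower.of_algebraMap_eq fun _ => rfl
  have : CharZero (FractionRing (MvPolynomial σ ℂ)) :=
    charZero_of_injective_algebraMap
      (FaithfulSMul.algebraMap_injective ℂ (FractionRing (MvPolynomial σ ℂ)))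
  have : Algebra.FormallyEtale (MvPolynomial σ ℂ) (FractionRing (MvPolynomial σ ℂ)) :=
    Algebra.FormallyEtale.of_isLocalization (nonZeroDivisors (MvPolynomial σ ℂ))
  have : Algebra.FormallyEtale (FractionRing (MvPolynomial σ ℂ)) L :=
    Algebra.FormallyEtale.of_isSeparable _ _
  have : Algebra.FormallyEtale (MvPolynomial σ ℂ) L :=
    Algebra.FormallyEtale.comp (MvPolynomial σ ℂ) (FractionRing (MvPolynomial σ ℂ)) L
  let d0 : Derivation ℂ (MvPolynomial σ ℂ) L := mkDerivation ℂ τ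
  let g : Ω[L⁄ℂ] →ₗ[L] L := (d0.liftKaehlerDifferential.liftBaseChange L).comp
    (KaehlerDifferential.tensorKaehlerEquivOfFormallyEtale ℂ (MvPolynomial σ ℂ) L).symm.toLinearMap
  refine ⟨(g.compDer (KaehlerDifferential.D ℂ L)).restrictScalars ℤ, fun s => ?_⟩
  change g (KaehlerDifferential.D ℂ L _) = _
  simp only [g, LinearMap.comp_apply, LinearEquiv.coe_coe,
    KaehlerDifferential.tensorKaehlerEquivOfFormallyEtale_symm_D_algebraMap,
    LinearMap.liftBaseChange_tmul, Derivation.liftKaehlerDifferential_comp_D, one_smul]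
  exact mkDerivation_X _ _ _

/-- A polynomial system without solutions over any finite extension of the field of rational
functions in the parameters has no solutions for generic values of the parameters. -/
lemma generic_no_solution {σ τ κ : Type} [Finite τ]
    (e : κ → MvPolynomial τ (MvPolynomial σ ℂ))
    (h : ∀ (L : Type) [Field L] [Algebra (MvPolynomial σ ℂ) L]
      [Algebra (FractionRing (MvPolynomial σ ℂ)) L]
      [IsScalarTower (MvPolynomial σ ℂ) (FractionRing (MvPolynomial σ ℂ)) L]
      [FiniteDimensional (FractionRing (MvPolynomial σ ℂ)) L] (v : τ → L),
      ¬ ∀ k, eval₂ (algebraMap (MvPolynomial σ ℂ) L) v (e k) = 0) :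
    ∃ F : MvPolynomial σ ℂ, F ≠ 0 ∧ ∀ t : σ → ℂ, eval t F ≠ 0 → ∀ v : τ → ℂ,
      ¬ ∀ k, eval₂ (eval t) v (e k) = 0 := by
  let R := MvPolynomial σ ℂ
  let k0 := FractionRing R
  set J : Ideal (MvPolynomial τ R) := Ideal.span (Set.range e) with hJ
  let _ : Algebra (MvPolynomial τ R) (MvPolynomial τ k0) := algebraMvPolynomial
  have htop : J.map (algebraMap (MvPolynomial τ R) (MvPolynomial τ k0)) = ⊤ := by
    by_contra hne
    obtain ⟨Mx, hMx, hle⟩ := Ideal.exists_le_maximal _ hne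
    let _ : Field (MvPolynomial τ k0 ⧸ Mx) := Ideal.Quotient.field Mx
    have : Module.Finite k0 (MvPolynomial τ k0 ⧸ Mx) :=
      finite_of_finite_type_of_isJacobsonRing k0 (MvPolynomial τ k0 ⧸ Mx)
    refine h (MvPolynomial τ k0 ⧸ Mx) (fun i => Ideal.Quotient.mk Mx (X i)) fun k => ?_
    have h1 : eval₂ (algebraMap R (MvPolynomial τ k0 ⧸ Mx)) (fun i => Ideal.Quotient.mk Mx (X i))
        (e k) = Ideal.Quotient.mk Mx (algebraMap (MvPolynomial τ R) (MvPolynomial τ k0) (e k)) := by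
      have : (eval₂Hom (algebraMap R (MvPolynomial τ k0 ⧸ Mx))
          (fun i => Ideal.Quotient.mk Mx (X i)))
          = (Ideal.Quotient.mk Mx).comp (algebraMap (MvPolynomial τ R) (MvPolynomial τ k0)) := by
        apply MvPolynomial.ringHom_ext
        · intro r
          change eval₂ _ _ (C r) = Ideal.Quotient.mk Mx (MvPolynomial.map (algebraMap R k0) (C r))
          rw [eval₂_C, map_C]
          rfl
        · intro i
          change eval₂ _ _ (X i) = Ideal.Quotient.mk Mx (MvPolynomial.map (algebraMap R k0) (X i))
          rw [eval₂_X, map_X]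
      exact congrArg (fun f => f (e k)) this
    rw [h1, Ideal.Quotient.eq_zero_iff_mem]
    exact hle (Ideal.mem_map_of_mem _ (Ideal.subset_span ⟨k, rfl⟩))
  have hd := (IsLocalization.map_algebraMap_ne_top_iff_disjoint
    ((nonZeroDivisors R).map (C (σ := τ))) (MvPolynomial τ k0) J).not.1 (not_not.2 htop)
  obtain ⟨_, ⟨F, hF, rfl⟩, hFJ⟩ := Set.not_disjoint_iff.1 hd
  refine ⟨F, nonZeroDivisors.ne_zero hF, fun t ht v hv => ht ?_⟩
  have hle : J ≤ RingHom.ker (eval₂Hom (eval t) v) := by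
    rw [hJ, Ideal.span_le]
    rintro _ ⟨k, rfl⟩
    exact hv k
  have := hle hFJ
  simpa [RingHom.mem_ker] using this

end Elimination

/-! ### The generic configuration -/

noncomputable section GenericPoint
open Matrix

/-- The index type of the parameters of a configuration. -/
abbrev Par (ι α β : Type) : Type :=
  (Fin 2 × ι × α) ⊕ (ι × β) ⊕ (Fin 2 × Fin 4 × α) ⊕ (Fin 5 × β)

lemma Dat.psi_eq_zero {ι S : Type*} [Fintype ι] [DecidableEq ι] [CommRing S] (D : Dat ι S) (s)
    (q : ι → S) (h : ∀ r, D.psi s q (Pi.single r 1) = 0) (v : ι → S) : D.psi s q v = 0 := by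
  let f : (ι → S) →ₗ[S] S :=
    { toFun := D.psi s q
      map_add' := fun v w => by
        simp only [psi, x_add, y_add, d_add, Pi.add_apply, ← Finset.sum_add_distrib]
        exact Finset.sum_congr rfl fun i _ => Finset.sum_congr rfl fun j _ => by ring
      map_smul' := fun r v => by
        simp only [psi, x_smul, y_smul, d_smul, Pi.smul_apply, smul_eq_mul, Finset.mul_sum,
          RingHom.id_apply]
        exact Finset.sum_congr rfl fun i _ => Finset.sum_congr rfl fun j _ => by ring }
  have : f = 0 := LinearMap.pi_ext' fun r => LinearMap.ext_ring (h r)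
  exact congrArg (fun g => g v) this

namespace Raw
section ofPar
variable {ι α β : Type} {S T : Type*}

/-- The configuration with the given parameters. -/
def ofPar (t : Par ι α β → S) : Raw ι α β S where
  A0 := Matrix.of fun i j => t (Sum.inl (0, i, j))
  A1 := Matrix.of fun i j => t (Sum.inl (1, i, j))
  B := Matrix.of fun i j => t (Sum.inr (Sum.inl (i, j)))
  u0 s j := t (Sum.inr (Sum.inr (Sum.inl (0, s, j))))
  u1 s j := t (Sum.inr (Sum.inr (Sum.inl (1, s, j))))
  v s j := t (Sum.inr (Sum.inr (Sum.inr (s, j))))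

lemma map_ofPar [CommRing S] [CommRing T] (φ : S →+* T) (t : Par ι α β → S) :
    (ofPar t).map φ = ofPar (φ ∘ t) := rfl

/-- The parameters of a configuration. -/
def toPar (r : Raw ι α β S) : Par ι α β → S
  | Sum.inl (k, i, j) => if k = 0 then r.A0 i j else r.A1 i j
  | Sum.inr (Sum.inl (i, j)) => r.B i j
  | Sum.inr (Sum.inr (Sum.inl (k, s, j))) => if k = 0 then r.u0 s j else r.u1 s j
  | Sum.inr (Sum.inr (Sum.inr (s, j))) => r.v s j

lemma ofPar_toPar (r : Raw ι α β S) : ofPar r.toPar = r := rfl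

end ofPar

variable {ι α β : Type} [Fintype ι] [DecidableEq ι] [Fintype α] [Fintype β] [DecidableEq β]

/-- A derivation that kills all parameters except those of the points on `N` kills everything
but those points. -/
lemma derivation_aux {K : Type*} [Field K] (I : Ix ι α β) (t : Raw ι α β K) (d : Derivation ℤ K K)
    (h0 : ∀ i j, d (t.A0 i j) = 0) (h1 : ∀ i j, d (t.A1 i j) = 0) (hB : ∀ i j, d (t.B i j) = 0)
    (hu0 : ∀ i j, d (t.u0 i j) = 0) (hu1 : ∀ i j, d (t.u1 i j) = 0) :
    (∀ i k, d ((t.dat I).X i k) = 0) ∧ (∀ i k, d ((t.dat I).Y i k) = 0) ∧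
    (∀ i k, d ((t.dat I).Z i k) = 0) ∧ (∀ i k, d ((t.dat I).m i k) = 0) ∧
    (∀ i k, d ((t.dat I).l i k) = 0) := by
  let K0 : Subring K :=
    { carrier := {a | d a = 0}
      mul_mem' := fun {a b} ha hb => by
        simp only [Set.mem_setOf_eq] at ha hb ⊢
        simp [ha, hb]
      one_mem' := by simp
      add_mem' := fun {a b} ha hb => by
        simp only [Set.mem_setOf_eq] at ha hb ⊢
        simp [ha, hb]
      zero_mem' := by simp
      neg_mem' := fun {a} ha => by
        simp only [Set.mem_setOf_eq] at ha ⊢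
        simp [ha] }
  let r : Raw ι α β K0 :=
    { A0 := Matrix.of fun i j => ⟨_, h0 i j⟩
      A1 := Matrix.of fun i j => ⟨_, h1 i j⟩
      B := Matrix.of fun i j => ⟨_, hB i j⟩
      u0 := fun i j => ⟨_, hu0 i j⟩
      u1 := fun i j => ⟨_, hu1 i j⟩
      v := 0 }
  have key : ∀ a : K0, d (K0.subtype a) = 0 := fun a => a.2
  refine ⟨fun i k => ?_, fun i k => ?_, fun i k => ?_, fun i k => ?_, fun i k => ?_⟩
  · rw [show (t.dat I).X i k = K0.subtype ((r.dat I).X i k) from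
      (congrFun (congrFun (r.map_X I K0.subtype) i) k).symm]
    exact key _
  · rw [show (t.dat I).Y i k = K0.subtype ((r.dat I).Y i k) from
      (congrFun (congrFun (r.map_Y I K0.subtype) i) k).symm]
    exact key _
  · rw [show (t.dat I).Z i k = K0.subtype ((r.dat I).Z i k) from
      (congrFun (congrFun (r.map_Z I K0.subtype) i) k).symm]
    exact key _
  · rw [show (t.dat I).m i k = K0.subtype ((r.dat I).m i k) from
      (congrFun (r.map_m K0.subtype i) k).symm]
    exact key _
  · rw [show (t.dat I).l i k = K0.subtype ((r.dat I).l i k) from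
      (congrFun (r.map_l K0.subtype i) k).symm]
    exact key _

/-- The configuration whose parameters are independent variables. -/
def univ (ι α β : Type) : Raw ι α β (MvPolynomial (Par ι α β) ℂ) := ofPar X

/-- Over a finite extension of the field of rational functions in the parameters, the singular
points of the cubic lie on `L ∪ M ∪ N`. -/
lemma generic_sing (I : Ix ι α β) {b : Prop} [Decidable b] (hg : (univ ι α β).gen I b ≠ 0)
    (L : Type) [Field L] [Algebra (MvPolynomial (Par ι α β) ℂ) L]
    [Algebra (FractionRing (MvPolynomial (Par ι α β) ℂ)) L]
    [IsScalarTower (MvPolynomial (Par ι α β) ℂ) (FractionRing (MvPolynomial (Par ι α β) ℂ)) L]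
    [FiniteDimensional (FractionRing (MvPolynomial (Par ι α β) ℂ)) L] (D : Dat ι L)
    (hDef : D = ((univ ι α β).map (algebraMap _ L)).dat I)
    (q : ι → L) (hq : ∀ v, D.psi D.sol q v = 0) : D.x q = 0 ∨ D.y q = 0 ∨ D.z q = 0 := by
  set t := (univ ι α β).map (algebraMap _ L) with ht
  have hinj : Function.Injective (algebraMap (MvPolynomial (Par ι α β) ℂ) L) := by
    rw [IsScalarTower.algebraMap_eq _ (FractionRing (MvPolynomial (Par ι α β) ℂ)) L]
    exact (algebraMap (FractionRing (MvPolynomial (Par ι α β) ℂ)) L).injective.comp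
      (IsFractionRing.injective _ _)
  have hgL : t.gen I b ≠ 0 := by
    rw [ht, ← map_gen]
    exact fun h => hg (hinj (h.trans (map_zero _).symm))
  have : CharZero L := by
    have h1 : Function.Injective ((algebraMap (MvPolynomial (Par ι α β) ℂ) L).comp C) :=
      hinj.comp (C_injective _ _)
    exact charZero_of_injective_ringHom h1
  simp only [gen, mul_ne_zero_iff] at hgL
  obtain ⟨⟨⟨hx, hy⟩, -⟩, hgood⟩ := hgL
  subst hDef
  refine Dat.bertini (t.std I hx hy) ((Dat.nice_iff _ b).2 hgood) ?_ q hq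
  intro κ
  obtain ⟨d, hd⟩ := exists_derivation (σ := Par ι α β) (L := L)
    (Raw.toPar { A0 := 0, A1 := 0, B := 0, u0 := 0, u1 := 0,
                 v := fun a => ∑ k, κ a k • Pi.single (I.k k) 1 })
  have e0 : ∀ i j, d (t.A0 i j) = 0 := fun i j => hd (Sum.inl (0, i, j))
  have e1 : ∀ i j, d (t.A1 i j) = 0 := fun i j => hd (Sum.inl (1, i, j))
  have eB : ∀ i j, d (t.B i j) = 0 := fun i j => hd (Sum.inr (Sum.inl (i, j)))
  have e2 : ∀ i j, d (t.u0 i j) = 0 := fun i j => hd (Sum.inr (Sum.inr (Sum.inl (0, i, j))))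
  have e3 : ∀ i j, d (t.u1 i j) = 0 := fun i j => hd (Sum.inr (Sum.inr (Sum.inl (1, i, j))))
  have ev : ∀ a, d ∘ t.v a = ∑ k, κ a k • Pi.single (I.k k) 1 := fun a =>
    funext fun j => hd (Sum.inr (Sum.inr (Sum.inr (a, j))))
  obtain ⟨dX, dY, dZ, dm, dl⟩ := derivation_aux I t d e0 e1 eB e2 e3
  refine ⟨d, dX, dY, dZ, dm, dl, fun a => ?_⟩
  have h1 : d ∘ (t.B *ᵥ t.v a) = t.B *ᵥ (d ∘ t.v a) := by
    funext i
    simp [mulVec, dotProduct, map_sum, Derivation.leibniz, eB]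
  change d ∘ (t.B *ᵥ t.v a) = ∑ k, κ a k • (t.B *ᵥ Pi.single (I.k k) 1)
  rw [h1, ev, Matrix.mulVec_sum]
  simp only [Matrix.mulVec_smul]

/-- For generic parameters the singular points of the cubic lie on `L ∪ M ∪ N`. -/
lemma exists_sing_poly (I : Ix ι α β) {b : Prop} [Decidable b] (hg : (univ ι α β).gen I b ≠ 0) :
    ∃ F : MvPolynomial (Par ι α β) ℂ, F ≠ 0 ∧ ∀ t : Par ι α β → ℂ, eval t F ≠ 0 →
      ∀ q : ι → ℂ, (∀ v, ((ofPar t).dat I).psi ((ofPar t).dat I).sol q v = 0) →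
        ((ofPar t).dat I).x q = 0 ∨ ((ofPar t).dat I).y q = 0 ∨ ((ofPar t).dat I).z q = 0 := by
  let R := MvPolynomial (Par ι α β) ℂ
  let D : Dat ι (MvPolynomial (ι ⊕ Unit) R) := ((univ ι α β).map C).dat I
  -- one chart for each choice of non-vanishing coordinates on the three quotients
  let e : Fin 4 × Fin 4 × Fin 3 → (ι ⊕ Unit) → MvPolynomial (ι ⊕ Unit) R := fun c => Sum.elim
    (fun r => D.psi D.sol (fun i => X (Sum.inl i)) (Pi.single r 1))
    (fun _ => D.x (fun i => X (Sum.inl i)) c.1 * D.y (fun i => X (Sum.inl i)) c.2.1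
      * D.z (fun i => X (Sum.inl i)) c.2.2 * X (Sum.inr ()) - 1)
  have hmap : ∀ {K : Type} [Field K] (φ : R →+* K) (v : ι ⊕ Unit → K),
      D.map (eval₂Hom φ v) = ((univ ι α β).map φ).dat I := by
    intro K _ φ v
    rw [Raw.map_dat]
    have : (eval₂Hom φ v).comp C = φ := by ext <;> simp
    conv_rhs => rw [← this]
    rfl
  have hX : ∀ {K : Type} [Field K] (φ : R →+* K) (v : ι ⊕ Unit → K),
      (eval₂Hom φ v) ∘ (fun i => (X (Sum.inl i) : MvPolynomial (ι ⊕ Unit) R))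
        = fun i => v (Sum.inl i) := fun φ v => funext fun i => by simp
  have he1 : ∀ {K : Type} [Field K] (φ : R →+* K) (v : ι ⊕ Unit → K) c r,
      eval₂ φ v (e c (Sum.inl r)) = (((univ ι α β).map φ).dat I).psi
        (((univ ι α β).map φ).dat I).sol (fun i => v (Sum.inl i)) (Pi.single r 1) := by
    intro K _ φ v c r
    change eval₂Hom φ v (D.psi D.sol _ _) = _
    rw [Dat.map_psi, hX, comp_single]
    simp only [Dat.map_sol, hmap]
  have he2 : ∀ {K : Type} [Field K] (φ : R →+* K) (v : ι ⊕ Unit → K) c,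
      eval₂ φ v (e c (Sum.inr ())) = (((univ ι α β).map φ).dat I).x (fun i => v (Sum.inl i)) c.1
        * (((univ ι α β).map φ).dat I).y (fun i => v (Sum.inl i)) c.2.1
        * (((univ ι α β).map φ).dat I).z (fun i => v (Sum.inl i)) c.2.2 * v (Sum.inr ()) - 1 := by
    intro K _ φ v c
    change eval₂Hom φ v (D.x _ _ * D.y _ _ * D.z _ _ * X _ - 1) = _
    have hz : eval₂Hom φ v (D.z (fun i => X (Sum.inl i)) c.2.2)
        = (D.map (eval₂Hom φ v)).z ((eval₂Hom φ v) ∘ fun i => X (Sum.inl i)) c.2.2 :=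
      congrFun (D.map_z (eval₂Hom φ v) _) c.2.2
    rw [map_sub, map_mul, map_mul, map_mul, Dat.map_x, Dat.map_y, hz, hX, hmap, map_one]
    simp
  have hF : ∀ c, ∃ F : R, F ≠ 0 ∧ ∀ t : Par ι α β → ℂ, eval t F ≠ 0 → ∀ v : ι ⊕ Unit → ℂ,
      ¬ ∀ k, eval₂ (eval t) v (e c k) = 0 := by
    intro c
    refine generic_no_solution (e c) ?_
    intro L _ _ _ _ _ v hv
    have h1 := fun r => (he1 (algebraMap R L) v c r).symm.trans (hv (Sum.inl r))
    have h2 := (he2 (algebraMap R L) v c).symm.trans (hv (Sum.inr ()))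
    rcases generic_sing I hg L _ rfl _ (Dat.psi_eq_zero _ _ _ h1) with h | h | h
    · rw [show _ = (0 : L) from congrFun h c.1] at h2
      simp at h2
    · rw [show _ = (0 : L) from congrFun h c.2.1] at h2
      simp at h2
    · rw [show _ = (0 : L) from congrFun h c.2.2] at h2
      simp at h2
  choose F hF0 hF using hF
  refine ⟨∏ c, F c, Finset.prod_ne_zero_iff.2 fun c _ => hF0 c, fun t ht q hq => ?_⟩
  by_contra hcon
  push Not at hcon
  obtain ⟨hx, hy, hz⟩ := hcon
  obtain ⟨i, hi⟩ := Function.ne_iff.1 hx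
  obtain ⟨j, hj⟩ := Function.ne_iff.1 hy
  obtain ⟨k, hk⟩ := Function.ne_iff.1 hz
  rw [map_prod] at ht
  have hu : (univ ι α β).map (eval t) = ofPar t := by
    rw [univ, map_ofPar]
    congr 1
    funext s; simp
  refine hF (i, j, k) t (Finset.prod_ne_zero_iff.1 ht _ (Finset.mem_univ _))
    (Sum.elim q fun _ => (((ofPar t).dat I).x q i * ((ofPar t).dat I).y q j
      * ((ofPar t).dat I).z q k)⁻¹) ?_
  rintro (r | ⟨⟩)
  · rw [he1, hu]
    exact hq _
  · rw [he2, hu]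
    simp only [Sum.elim_inl, Sum.elim_inr]
    rw [mul_inv_cancel₀ (mul_ne_zero (mul_ne_zero hi hj) hk), sub_self]

end Raw
end GenericPoint

/-! ### A sample configuration: numerical data -/

noncomputable section Sample
open Matrix

namespace Sample

/-- The images of the points `m i` in the quotient by `N`. -/
def cM0 : Fin 4 → Fin 3 → ℤ := ![![1, 0, 0], ![0, 1, 0], ![2, -1, 0], ![1, -2, 2]]
/-- The images of the points `l j` in the quotient by `N`. -/
def cL0 : Fin 4 → Fin 3 → ℤ := ![![0, 0, 1], ![1, -1, -1], ![-2, -2, 1], ![-2, -2, -1]]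
/-- The image of `w1` in the quotient by `N`. -/
def P0 : Fin 3 → ℤ := ![-2, -1, -2]
/-- The image of `w2` in the quotient by `N`. -/
def Q0 : Fin 3 → ℤ := ![2, -2, 1]
/-- The coordinates of the points of `N` along the `m i`. -/
def xp : Fin 5 → Fin 4 → ℤ :=
  ![![1, -1, 0, 0], ![2, 1, 0, 0], ![0, 0, 2, -1], ![0, 0, -3, 4], ![-2, 0, 1, 0]]
/-- The coordinates of the points of `N` along the `l j`. -/
def yp : Fin 5 → Fin 4 → ℤ :=
  ![![-1, -1, 0, 0], ![0, 0, 1, -1], ![3, -1, 0, 0], ![0, 0, -3, -1], ![3, 0, -1, 0]]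
/-- The coordinates of the points of `N` along `w1`. -/
def wp : Fin 5 → ℤ := ![0, 1, 1, 3, 1]
/-- The coordinates of three directions in `N` along the `m i`. -/
def xν : Fin 3 → Fin 4 → ℤ := ![![-2, 1, 1, 0], ![-1, 2, 0, 1], ![2, 2, 0, 0]]
/-- The coordinates of three directions in `N` along the `l j`. -/
def yν : Fin 3 → Fin 4 → ℤ := ![![0, 0, 0, 0], ![-2, 0, 0, 0], ![-1, 0, 1, 0]]
/-- The coefficients of the cubic. -/
def s0 : Fin 4 → Fin 4 → ℤ :=
  ![![30, 30, 90, -90], ![30, 30, 180, -180], ![20, -36, 60, -108], ![-40, 72, 45, -81]]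

/-- The conditions on a cubic to be singular at the points of `N`. -/
def row0 (a : Fin 5) (k : Fin 3) : ℤ :=
  ∑ i, ∑ j, s0 i j * (xp a i * yp a j * crs (cM0 i) (cL0 j) k)

/-- The derivatives of the differential of the cubic. -/
def rowD0 (a : Fin 5) (k : Fin 3) : Fin 3 → ℤ := fun k' =>
  ∑ i, ∑ j, s0 i j * ((xν k i * yp a j + xp a i * yν k j) * crs (cM0 i) (cL0 j) k')

/-- The matrices `HL` up to scaling of rows. -/
def HL0 (i : Fin 4) : Matrix (Fin 4) (Fin 4) ℤ := Matrix.of fun i' j =>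
  s0 i' j * det3 (cM0 i') (cL0 j) (if i' = i then P0 else cM0 i)

/-- The matrices `HM` up to scaling of rows. -/
def HM0 (j : Fin 4) : Matrix (Fin 4) (Fin 4) ℤ := Matrix.of fun j' i =>
  s0 i j' * det3 (cM0 i) (cL0 j') (if j' = j then P0 else cL0 j)

lemma N1a0 : ∀ i j j', j ≠ j' → det3 (cM0 i) (cL0 j) (cL0 j') ≠ 0 := by decide
lemma N1b0 : ∀ i i' j, i ≠ i' → det3 (cM0 i) (cM0 i') (cL0 j) ≠ 0 := by decide
lemma N2a0 : ∀ i j, det3 (cM0 i) (cL0 j) P0 ≠ 0 := by decide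
lemma N2b0 : ∀ i i', i ≠ i' → det3 (cM0 i) (cM0 i') P0 ≠ 0 := by decide
lemma N2c0 : ∀ j j', j ≠ j' → det3 (cL0 j) (cL0 j') P0 ≠ 0 := by decide
lemma N3a0 : ∀ j, det3 (cL0 j) P0 Q0 ≠ 0 := by decide
lemma N3b0 : ∀ i, det3 (cM0 i) P0 Q0 ≠ 0 := by decide
lemma hs0 : ∀ i j, s0 i j ≠ 0 := by decide
lemma hν0 : ∀ a, det3 (rowD0 a 0) (rowD0 a 1) (rowD0 a 2) ≠ 0 := by decide +kernel
lemma hHL0 : ∀ i, (HL0 i).det ≠ 0 := by decide +kernel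
lemma hHM0 : ∀ i, (HM0 i).det ≠ 0 := by decide +kernel
lemma row0_eq : ∀ a k, row0 a k = 0 := by decide +kernel

/-- Only the multiples of `s0` satisfy the fifteen linear conditions. -/
lemma unique_s0 (s : Fin 4 → Fin 4 → ℂ)
    (hs : ∀ a k, ∑ i, ∑ j, s i j * ((xp a i : ℂ) * yp a j * (crs (cM0 i) (cL0 j) k : ℤ)) = 0)
    (i j) : s i j = s 0 0 / 30 * s0 i j := by
  have h00 : 1 * s 1 0 - 1 * s 1 1 = 0 :=
    Eq.trans (by simp [Fin.sum_univ_four, xp, yp, cM0, cL0, crs] <;> ring) (hs 0 0)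
  have h01 : 1 * s 0 0 - 1 * s 0 1 = 0 :=
    Eq.trans (by simp [Fin.sum_univ_four, xp, yp, cM0, cL0, crs] <;> ring) (hs 0 1)
  have h02 : 1 * s 0 1 - 1 * s 1 1 = 0 :=
    Eq.trans (by simp [Fin.sum_univ_four, xp, yp, cM0, cL0, crs] <;> ring) (hs 0 2)
  have h10 : 1 * s 1 2 + 1 * s 1 3 = 0 :=
    Eq.trans (by simp [Fin.sum_univ_four, xp, yp, cM0, cL0, crs] <;> ring) (hs 1 0)
  have h11 : -2 * s 0 2 - 2 * s 0 3 = 0 :=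
    Eq.trans (by simp [Fin.sum_univ_four, xp, yp, cM0, cL0, crs] <;> ring) (hs 1 1)
  have h12 : -4 * s 0 2 + 4 * s 0 3 + 2 * s 1 2 - 2 * s 1 3 = 0 :=
    Eq.trans (by simp [Fin.sum_univ_four, xp, yp, cM0, cL0, crs] <;> ring) (hs 1 2)
  have h20 : -6 * s 2 0 - 2 * s 2 1 + 6 * s 3 0 + 4 * s 3 1 = 0 :=
    Eq.trans (by simp [Fin.sum_univ_four, xp, yp, cM0, cL0, crs] <;> ring) (hs 2 0)
  have h21 : -12 * s 2 0 - 4 * s 2 1 + 3 * s 3 0 + 3 * s 3 1 = 0 :=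
    Eq.trans (by simp [Fin.sum_univ_four, xp, yp, cM0, cL0, crs] <;> ring) (hs 2 1)
  have h22 : 2 * s 2 1 + 1 * s 3 1 = 0 :=
    Eq.trans (by simp [Fin.sum_univ_four, xp, yp, cM0, cL0, crs] <;> ring) (hs 2 2)
  have h30 : -9 * s 2 2 + 3 * s 2 3 - 24 * s 3 2 - 24 * s 3 3 = 0 :=
    Eq.trans (by simp [Fin.sum_univ_four, xp, yp, cM0, cL0, crs] <;> ring) (hs 3 0)
  have h31 : -18 * s 2 2 + 6 * s 2 3 + 60 * s 3 2 + 12 * s 3 3 = 0 :=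
    Eq.trans (by simp [Fin.sum_univ_four, xp, yp, cM0, cL0, crs] <;> ring) (hs 3 1)
  have h32 : -54 * s 2 2 - 18 * s 2 3 + 72 * s 3 2 + 24 * s 3 3 = 0 :=
    Eq.trans (by simp [Fin.sum_univ_four, xp, yp, cM0, cL0, crs] <;> ring) (hs 3 2)
  have h40 : -3 * s 2 0 + 1 * s 2 2 = 0 :=
    Eq.trans (by simp [Fin.sum_univ_four, xp, yp, cM0, cL0, crs] <;> ring) (hs 4 0)
  have h41 : 6 * s 0 0 - 2 * s 0 2 - 6 * s 2 0 + 2 * s 2 2 = 0 :=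
    Eq.trans (by simp [Fin.sum_univ_four, xp, yp, cM0, cL0, crs] <;> ring) (hs 4 1)
  have h42 : -4 * s 0 2 + 6 * s 2 2 = 0 :=
    Eq.trans (by simp [Fin.sum_univ_four, xp, yp, cM0, cL0, crs] <;> ring) (hs 4 2)
  fin_cases i <;> fin_cases j
  · simp [s0]
  · change s 0 1 = s 0 0 / 30 * ((30 : ℤ) : ℂ)
    push_cast
    linear_combination (-1) * h01
  · change s 0 2 = s 0 0 / 30 * ((90 : ℤ) : ℂ)
    push_cast
    linear_combination (1) * h40 + (-1/2) * h41
  · change s 0 3 = s 0 0 / 30 * ((-90 : ℤ) : ℂ)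
    push_cast
    linear_combination (-1/2) * h11 + (-1) * h40 + (1/2) * h41
  · change s 1 0 = s 0 0 / 30 * ((30 : ℤ) : ℂ)
    push_cast
    linear_combination (1) * h00 + (-1) * h01 + (-1) * h02
  · change s 1 1 = s 0 0 / 30 * ((30 : ℤ) : ℂ)
    push_cast
    linear_combination (-1) * h01 + (-1) * h02
  · change s 1 2 = s 0 0 / 30 * ((180 : ℤ) : ℂ)
    push_cast
    linear_combination (1/2) * h10 + (1/2) * h11 + (1/4) * h12 + (2) * h40 + (-1) * h41
  · change s 1 3 = s 0 0 / 30 * ((-180 : ℤ) : ℂ)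
    push_cast
    linear_combination (1/2) * h10 + (-1/2) * h11 + (-1/4) * h12 + (-2) * h40 + (1) * h41
  · change s 2 0 = s 0 0 / 30 * ((20 : ℤ) : ℂ)
    push_cast
    linear_combination (-1/9) * h40 + (-1/9) * h41 + (1/18) * h42
  · change s 2 1 = s 0 0 / 30 * ((-36 : ℤ) : ℂ)
    push_cast
    linear_combination (1/10) * h20 + (-1/5) * h21 + (1/5) * h22 + (1/5) * h40 + (1/5) * h41 + (-1/10) * h42
  · change s 2 2 = s 0 0 / 30 * ((60 : ℤ) : ℂ)
    push_cast
    linear_combination (2/3) * h40 + (-1/3) * h41 + (1/6) * h42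
  · change s 2 3 = s 0 0 / 30 * ((-108 : ℤ) : ℂ)
    push_cast
    linear_combination (-1/45) * h30 + (2/45) * h31 + (-2/45) * h32 + (-6/5) * h40 + (3/5) * h41 + (-3/10) * h42
  · change s 3 0 = s 0 0 / 30 * ((-40 : ℤ) : ℂ)
    push_cast
    linear_combination (1/3) * h20 + (-1/3) * h21 + (-1/3) * h22 + (2/9) * h40 + (2/9) * h41 + (-1/9) * h42
  · change s 3 1 = s 0 0 / 30 * ((72 : ℤ) : ℂ)
    push_cast
    linear_combination (-1/5) * h20 + (2/5) * h21 + (3/5) * h22 + (-2/5) * h40 + (-2/5) * h41 + (1/5) * h42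
  · change s 3 2 = s 0 0 / 30 * ((45 : ℤ) : ℂ)
    push_cast
    linear_combination (1/72) * h30 + (1/72) * h31 + (1/144) * h32 + (1/2) * h40 + (-1/4) * h41 + (1/8) * h42
  · change s 3 3 = s 0 0 / 30 * ((-81 : ℤ) : ℂ)
    push_cast
    linear_combination (-7/120) * h30 + (-1/120) * h31 + (-1/80) * h32 + (-9/10) * h40 + (9/20) * h41 + (-9/40) * h42

end Sample
end Sample

/-! ### A sample configuration: genericity conditions -/

noncomputable section SampleNice
open Matrix

namespace Sample

lemma det3_smul_all {S : Type*} [CommRing S] (r s t : S) (a b c : Fin 3 → S) :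
    det3 (r • a) (s • b) (t • c) = r * s * t * det3 a b c := by
  simp only [det3, Pi.smul_apply, smul_eq_mul]; ring

lemma crs_smul {S : Type*} [CommRing S] (r s : S) (a b : Fin 3 → S) (k) :
    crs (r • a) (s • b) k = r * s * crs a b k := by
  fin_cases k <;> simp [crs] <;> ring

/-- The complex vector with the given integer entries. -/
def cst {κ : Type*} (v : κ → ℤ) : κ → ℂ := Int.castRingHom ℂ ∘ v

lemma det3_cst (a b c : Fin 3 → ℤ) : det3 (cst a) (cst b) (cst c) = (det3 a b c : ℤ) :=
  (map_det3 (Int.castRingHom ℂ) a b c).symm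

lemma crs_cst (a b : Fin 3 → ℤ) (k) : crs (cst a) (cst b) k = (crs a b k : ℤ) :=
  (map_crs (Int.castRingHom ℂ) a b k).symm

/-- A configuration whose invariants are, up to scaling, those of the sample satisfies all
explicit genericity conditions. -/
lemma nice_of_values {ι : Type*} [Fintype ι] (D : Dat ι ℂ) (b : Prop) {δx δy δz δP δQ : ℂ}
    (hx : δx ≠ 0) (hy : δy ≠ 0) (hz : δz ≠ 0) (hP : δP ≠ 0) (hQ : δQ ≠ 0)
    (ecM : ∀ i, D.cM i = δz • cst (cM0 i)) (ecL : ∀ j, D.cL j = δz • cst (cL0 j))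
    (eP : D.P = δP • cst P0) (eQ : b → D.Q = δQ • cst Q0)
    (exp : ∀ a, D.x (D.p a) = δx • cst (xp a)) (eyp : ∀ a, D.y (D.p a) = δy • cst (yp a))
    (exν : ∀ k, D.x (D.ν k) = δx • cst (xν k)) (eyν : ∀ k, D.y (D.ν k) = δy • cst (yν k)) :
    D.Nice b := by
  have huniq : ∀ s : Fin 4 → Fin 4 → ℂ, (∀ a, D.row (D.p a) s = 0) →
      ∀ i j, s i j = s 0 0 / 30 * s0 i j := by
    intro s hs
    refine unique_s0 s fun a k => ?_
    have h := congrFun (hs a) k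
    have h2 : D.row (D.p a) s k = δx * δy * (δz * δz) *
        ∑ i, ∑ j, s i j * ((xp a i : ℂ) * yp a j * (crs (cM0 i) (cL0 j) k : ℤ)) := by
      simp only [Dat.row, exp, eyp, ecM, ecL, crs_smul, crs_cst, Finset.mul_sum]
      refine Finset.sum_congr rfl fun i _ => Finset.sum_congr rfl fun j _ => ?_
      simp only [cst, Pi.smul_apply, smul_eq_mul, Function.comp_apply, eq_intCast]
      ring
    rw [h2] at h
    exact (mul_eq_zero.1 h).resolve_left
      (mul_ne_zero (mul_ne_zero hx hy) (mul_ne_zero hz hz))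
  have hdet : D.E.det ≠ 0 := by
    intro h0
    obtain ⟨w, hw, hEw⟩ := Matrix.exists_mulVec_eq_zero_iff.2 h0
    have hE := D.E_mulVec (fun i j => w (i, j))
    have hE' : ∀ r, (D.E *ᵥ fun c => w (c.1, c.2)) r = 0 := fun r => congrFun hEw r
    have h1 : ∀ a, D.row (D.p a) (fun i j => w (i, j)) = 0 := by
      intro a
      funext k
      have := hE (eqv16.symm (some (a, k)))
      rw [hE'] at this
      simpa using this.symm
    have h2 : w (0, 0) = 0 := by
      have := hE (eqv16.symm none)
      rw [hE'] at this
      simpa using this.symm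
    refine hw (funext fun c => ?_)
    have := huniq _ h1 c.1 c.2
    simpa [h2] using this
  set κ := D.E.det / 30 with hκ
  have hκ0 : κ ≠ 0 := div_ne_zero hdet (by norm_num)
  have hsol : ∀ i j, D.sol i j = κ * s0 i j := by
    intro i j
    rw [huniq D.sol D.row_sol i j, D.sol_zero]
  have hrowD : ∀ a k, D.rowD (D.p a) (D.ν k) D.sol
      = (κ * (δx * δy * (δz * δz))) • cst (rowD0 a k) := by
    intro a k
    funext k'
    simp only [Dat.rowD, exp, eyp, exν, eyν, ecM, ecL, crs_smul, crs_cst, hsol]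
    simp only [cst, Pi.smul_apply, smul_eq_mul, Function.comp_apply, eq_intCast, rowD0, Int.cast_sum,
      Int.cast_mul, Int.cast_add, Finset.mul_sum]
    refine Finset.sum_congr rfl fun i _ => Finset.sum_congr rfl fun j _ => ?_
    ring
  refine
    { N1a := fun i j j' h => ?_
      N1b := fun i i' j h => ?_
      N2a := fun i j => ?_
      N2b := fun i i' h => ?_
      N2c := fun j j' h => ?_
      N3 := fun hb => ⟨fun j => ?_, fun i => ?_⟩
      detE := hdet
      hs := fun i j => ?_
      hν := fun a => ?_
      hHL := fun i => ?_
      hHM := fun j => ?_ }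
  · simp only [ecM, ecL, det3_smul_all, det3_cst]
    exact mul_ne_zero (by simp [hz]) (Int.cast_ne_zero.2 (N1a0 i j j' h))
  · simp only [ecM, ecL, det3_smul_all, det3_cst]
    exact mul_ne_zero (by simp [hz]) (Int.cast_ne_zero.2 (N1b0 i i' j h))
  · simp only [ecM, ecL, eP, det3_smul_all, det3_cst]
    exact mul_ne_zero (by simp [hz, hP]) (Int.cast_ne_zero.2 (N2a0 i j))
  · simp only [ecM, eP, det3_smul_all, det3_cst]
    exact mul_ne_zero (by simp [hz, hP]) (Int.cast_ne_zero.2 (N2b0 i i' h))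
  · simp only [ecL, eP, det3_smul_all, det3_cst]
    exact mul_ne_zero (by simp [hz, hP]) (Int.cast_ne_zero.2 (N2c0 j j' h))
  · simp only [ecL, eP, eQ hb, det3_smul_all, det3_cst]
    exact mul_ne_zero (by simp [hz, hP, hQ]) (Int.cast_ne_zero.2 (N3a0 j))
  · simp only [ecM, eP, eQ hb, det3_smul_all, det3_cst]
    exact mul_ne_zero (by simp [hz, hP, hQ]) (Int.cast_ne_zero.2 (N3b0 i))
  · rw [hsol]
    exact mul_ne_zero hκ0 (Int.cast_ne_zero.2 (hs0 i j))
  · simp only [hrowD, det3_smul_all, det3_cst]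
    exact mul_ne_zero (by simp [hκ0, hx, hy, hz]) (Int.cast_ne_zero.2 (hν0 a))
  · have : D.HL i = Matrix.of fun i' j => (κ * (δz * δz * if i' = i then δP else δz)) *
        ((HL0 i).map (Int.castRingHom ℂ)) i' j := by
      ext i' j
      simp only [Dat.HL, HL0, Matrix.of_apply, Matrix.map_apply, hsol, ecM, ecL, eP]
      split_ifs <;> simp only [det3_smul_all, det3_cst, eq_intCast, Int.cast_mul] <;> ring
    rw [this, Matrix.det_mul_column, ← RingHom.mapMatrix_apply, ← RingHom.map_det]
    refine mul_ne_zero (Finset.prod_ne_zero_iff.2 fun i' _ => ?_) (Int.cast_ne_zero.2 (hHL0 i))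
    split_ifs <;> simp [hκ0, hz, hP]
  · have : D.HM j = Matrix.of fun j' i => (κ * (δz * δz * if j' = j then δP else δz)) *
        ((HM0 j).map (Int.castRingHom ℂ)) j' i := by
      ext i' j
      simp only [Dat.HM, HM0, Matrix.of_apply, Matrix.map_apply, hsol, ecM, ecL, eP]
      split_ifs <;> simp only [det3_smul_all, det3_cst, eq_intCast, Int.cast_mul] <;> ring
    rw [this, Matrix.det_mul_column, ← RingHom.mapMatrix_apply, ← RingHom.map_det]
    refine mul_ne_zero (Finset.prod_ne_zero_iff.2 fun i' _ => ?_) (Int.cast_ne_zero.2 (hHM0 j))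
    split_ifs <;> simp [hκ0, hz, hP]

end Sample
end SampleNice

/-! ### A sample configuration: realisation in every dimension -/

noncomputable section SampleConfiguration
open Matrix

/-- If a linear map kills the columns of `A` and sends the vectors `c` to the standard basis, then
the forms attached to `A` and `c` are the components of that map, up to scaling. -/
lemma forms_eq {ι α γ K : Type*} [Fintype ι] [DecidableEq ι] [Fintype α] [Fintype γ]
    [DecidableEq γ] [Field K] (e : ι ≃ α ⊕ γ) (A : Matrix ι α K) (c : γ → ι → K)
    (g : (ι → K) →ₗ[K] (γ → K)) (hA : Function.Injective A.mulVec) (gA : ∀ u, g (A *ᵥ u) = 0)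
    (gc : ∀ i, g (c i) = Pi.single i 1) :
    (sqm e A c).det ≠ 0 ∧ ∀ q, forms e A c *ᵥ q = (sqm e A c).det • g q := by
  have key : ∀ r : ι → K, g (sqm e A c *ᵥ r) = fun i => r (e.symm (Sum.inr i)) := by
    intro r
    rw [sqm_mulVec, map_add, gA, map_sum, zero_add]
    funext i
    simp [gc, Pi.single_apply]
  have hdet : (sqm e A c).det ≠ 0 := by
    intro h0
    obtain ⟨r, hr, h⟩ := Matrix.exists_mulVec_eq_zero_iff.2 h0
    have h1 := key r
    rw [h, map_zero] at h1
    have h2 : ∀ i, r (e.symm (Sum.inr i)) = 0 := fun i => (congrFun h1 i).symm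
    rw [sqm_mulVec] at h
    simp only [h2, zero_smul, Finset.sum_const_zero, add_zero] at h
    have h3 := hA (h.trans (Matrix.mulVec_zero A).symm)
    refine hr (funext fun k => ?_)
    rw [← e.symm_apply_apply k]
    rcases e k with a | i
    · exact congrFun h3 a
    · exact h2 i
  refine ⟨hdet, fun q => ?_⟩
  have hk := key ((sqm e A c).adjugate *ᵥ q)
  rw [Matrix.mulVec_mulVec, Matrix.mul_adjugate, Matrix.smul_mulVec, Matrix.one_mulVec,
    map_smul] at hk
  exact hk.symm

namespace Sample

/-- A bijection matching the last three indices with the pivots `m 0`, `m 1`, `l 0`, and the first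
five with the remaining `m i` and `l j`. -/
def pivotEquiv : Fin 5 ⊕ Fin 3 ≃ Fin 4 ⊕ Fin 4 where
  toFun := Sum.elim ![Sum.inl 2, Sum.inl 3, Sum.inr 1, Sum.inr 2, Sum.inr 3]
    ![Sum.inl 0, Sum.inl 1, Sum.inr 0]
  invFun := Sum.elim ![Sum.inr 0, Sum.inr 1, Sum.inl 0, Sum.inl 1]
    ![Sum.inr 2, Sum.inl 2, Sum.inl 3, Sum.inl 4]
  left_inv := by decide
  right_inv := by decide

section
variable {ι α β ω : Type} [Fintype ι] [DecidableEq ι] [Fintype α] [DecidableEq α] [Fintype β]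
  [DecidableEq β] [Fintype ω] [DecidableEq ω]
  (eι : ι ≃ Fin 4 ⊕ Fin 4 ⊕ ω) (eα : α ≃ Fin 4 ⊕ ω) (eβ : β ≃ Fin 5 ⊕ ω) (k1 k2 : ω)

/-- The coordinates are those along the `β` free ones and the three pivots. -/
def H : β ⊕ Fin 3 ≃ ι :=
  (eβ.sumCongr (Equiv.refl (Fin 3))).trans <|
  (Equiv.sumAssoc (Fin 5) ω (Fin 3)).trans <|
  ((Equiv.refl (Fin 5)).sumCongr (Equiv.sumComm ω (Fin 3))).trans <|
  (Equiv.sumAssoc (Fin 5) (Fin 3) ω).symm.trans <|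
  (pivotEquiv.sumCongr (Equiv.refl ω)).trans <|
  (Equiv.sumAssoc (Fin 4) (Fin 4) ω).trans eι.symm

/-- The images in the quotient by `N` of the vectors of the third block of coordinates. -/
def pq (k : ω) : Fin 3 → ℂ := if k = k1 then cst P0 else if k = k2 then cst Q0 else 0

/-- The images of the basis vectors in the quotient by `N`. -/
def Zc (r : ι) : Fin 3 → ℂ :=
  Sum.elim (fun i => cst (cM0 i)) (Sum.elim (fun j => cst (cL0 j)) (pq k1 k2)) (eι r)

/-- The quotient map by `N`. -/
def Z0 : (ι → ℂ) →ₗ[ℂ] (Fin 3 → ℂ) where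
  toFun q := ∑ r, q r • Zc eι k1 k2 r
  map_add' q q' := by simp [add_smul, Finset.sum_add_distrib]
  map_smul' a q := by simp [mul_smul, Finset.smul_sum]

/-- The first block of coordinates. -/
def gx : (ι → ℂ) →ₗ[ℂ] (Fin 4 → ℂ) := LinearMap.funLeft ℂ ℂ fun i => eι.symm (Sum.inl i)

/-- The second block of coordinates. -/
def gy : (ι → ℂ) →ₗ[ℂ] (Fin 4 → ℂ) :=
  LinearMap.funLeft ℂ ℂ fun j => eι.symm (Sum.inr (Sum.inl j))

/-- The vector with given blocks of coordinates, the third one being a multiple of the basis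
vector with index `k1`. -/
def vec (a b : Fin 4 → ℤ) (w : ℤ) (r : ι) : ℂ :=
  Sum.elim (cst a) (Sum.elim (cst b) (fun k => if k = k1 then (w : ℂ) else 0)) (eι r)

/-- The combinatorial choices for the sample configuration. -/
def ix : Ix ι α β where
  eA := eι.trans ((Equiv.sumComm _ _).trans (eα.symm.sumCongr (Equiv.refl _)))
  eB := (H eι eβ).symm
  o1 := eι.symm (Sum.inr (Sum.inr k1))
  o2 := eι.symm (Sum.inr (Sum.inr k2))
  k := ![eβ.symm (Sum.inl 0), eβ.symm (Sum.inl 1), eβ.symm (Sum.inl 3)]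

/-- The sample configuration: `L` and `M` are coordinate subspaces, and `N` is the kernel of
`Z0`. -/
def raw : Raw ι α β ℂ where
  A0 := Matrix.of fun r a => if r = eι.symm (Sum.inr (eα a)) then 1 else 0
  A1 := Matrix.of fun r a => if r = eι.symm ((eα a).map id Sum.inr) then 1 else 0
  B := Matrix.of fun r b => (if r = H eι eβ (Sum.inl b) then 1 else 0) -
    ∑ i, if r = H eι eβ (Sum.inr i) then Zc eι k1 k2 (H eι eβ (Sum.inl b)) i else 0
  u0 j := Pi.single (eα.symm (Sum.inl j)) 1
  u1 j := Pi.single (eα.symm (Sum.inl j)) 1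
  v a b := vec eι k1 (xp a) (yp a) (wp a) (H eι eβ (Sum.inl b))

lemma Zc_piv (i : Fin 3) : Zc eι k1 k2 (H eι eβ (Sum.inr i)) = Pi.single i 1 := by
  fin_cases i <;> funext k <;> fin_cases k <;> simp [H, pivotEquiv, Zc, cst, cM0, cL0]

lemma B_free (u : β → ℂ) (b : β) :
    ((raw eι eα eβ k1 k2).B *ᵥ u) (H eι eβ (Sum.inl b)) = u b := by
  simp [raw, Matrix.mulVec, dotProduct]

lemma B_piv (u : β → ℂ) (i : Fin 3) : ((raw eι eα eβ k1 k2).B *ᵥ u) (H eι eβ (Sum.inr i))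
    = -∑ b, u b * Zc eι k1 k2 (H eι eβ (Sum.inl b)) i := by
  simp [raw, Matrix.mulVec, dotProduct, mul_comm]

lemma Z0_apply (q : ι → ℂ) (i : Fin 3) : Z0 eι k1 k2 q i
    = ∑ b, q (H eι eβ (Sum.inl b)) * Zc eι k1 k2 (H eι eβ (Sum.inl b)) i
      + q (H eι eβ (Sum.inr i)) := by
  change (∑ r, q r • Zc eι k1 k2 r) i = _
  rw [← (H eι eβ).sum_comp, Fintype.sum_sum_type]
  simp [Zc_piv, Finset.sum_apply, Pi.single_apply]

lemma Z0_B (u : β → ℂ) : Z0 eι k1 k2 ((raw eι eα eβ k1 k2).B *ᵥ u) = 0 := by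
  funext i
  rw [Z0_apply eι eβ, B_piv]
  simp [B_free]

lemma B_of_Z0 (q : ι → ℂ) (h : Z0 eι k1 k2 q = 0) :
    (raw eι eα eβ k1 k2).B *ᵥ (fun b => q (H eι eβ (Sum.inl b))) = q := by
  funext r
  rw [← (H eι eβ).apply_symm_apply r]
  rcases (H eι eβ).symm r with b | i
  · rw [B_free]
  · have := congrFun h i
    rw [Z0_apply eι eβ, Pi.zero_apply] at this
    rw [B_piv]
    linear_combination -this

lemma B_inj : Function.Injective (raw eι eα eβ k1 k2).B.mulVec := by
  intro u u' h
  funext b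
  rw [← B_free eι eα eβ k1 k2 u b, ← B_free eι eα eβ k1 k2 u' b]
  exact congrFun h _

lemma Z0_single (r : ι) : Z0 eι k1 k2 (Pi.single r 1) = Zc eι k1 k2 r := by
  change ∑ r', (Pi.single r 1 : ι → ℂ) r' • Zc eι k1 k2 r' = _
  rw [Finset.sum_eq_single r] <;> simp +contextual [Pi.single_apply]

lemma Z0_vec (a b : Fin 4 → ℤ) (w : ℤ)
    (h : ∀ k, ∑ i, a i * cM0 i k + ∑ j, b j * cL0 j k + w * P0 k = 0) :
    Z0 eι k1 k2 (vec eι k1 a b w) = 0 := by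
  funext k
  change (∑ r, vec eι k1 a b w r • Zc eι k1 k2 r) k = 0
  rw [← eι.symm.sum_comp, Fintype.sum_sum_type, Fintype.sum_sum_type]
  have := congrArg (Int.cast : ℤ → ℂ) (h k)
  push_cast at this
  have hs : ∑ c : ω, (if c = k1 then (w : ℂ) else 0) • pq k1 k2 c = (w : ℂ) • cst P0 := by
    rw [Finset.sum_eq_single k1] <;> simp +contextual [pq]
  simp only [vec, Zc, Equiv.apply_symm_apply, Sum.elim_inl, Sum.elim_inr, hs]
  simpa [cst, Finset.sum_apply, add_assoc] using this

lemma raw_l (j : Fin 4) :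
    (raw eι eα eβ k1 k2).l j = Pi.single (eι.symm (Sum.inr (Sum.inl j))) 1 := by
  funext r
  simp [Raw.l, raw, Pi.single_apply]

lemma raw_m (i : Fin 4) : (raw eι eα eβ k1 k2).m i = Pi.single (eι.symm (Sum.inl i)) 1 := by
  funext r
  simp [Raw.m, raw, Pi.single_apply]

lemma A0_inj : Function.Injective (raw eι eα eβ k1 k2).A0.mulVec := by
  intro u u' h
  funext a
  simpa [raw, Matrix.mulVec, dotProduct] using congrFun h (eι.symm (Sum.inr (eα a)))

lemma A1_inj : Function.Injective (raw eι eα eβ k1 k2).A1.mulVec := by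
  have hinj : Function.Injective (Sum.map id Sum.inr : Fin 4 ⊕ ω → Fin 4 ⊕ Fin 4 ⊕ ω) :=
    Function.injective_id.sumMap Sum.inr_injective
  intro u u' h
  funext a
  simpa [raw, Matrix.mulVec, dotProduct, hinj.eq_iff] using
    congrFun h (eι.symm ((eα a).map id Sum.inr))

lemma gx_A0 (u : α → ℂ) : gx eι ((raw eι eα eβ k1 k2).A0 *ᵥ u) = 0 := by
  funext i
  simp [gx, raw, LinearMap.funLeft_apply, Matrix.mulVec, dotProduct]

lemma gy_A1 (u : α → ℂ) : gy eι ((raw eι eα eβ k1 k2).A1 *ᵥ u) = 0 := by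
  funext i
  simp only [gy, raw, LinearMap.funLeft_apply, Matrix.mulVec, dotProduct, Matrix.of_apply]
  refine Finset.sum_eq_zero fun a _ => ?_
  rcases eα a <;> simp

lemma gx_m (i : Fin 4) : gx eι ((raw eι eα eβ k1 k2).m i) = Pi.single i 1 := by
  funext i'
  simp [raw_m, gx, LinearMap.funLeft_apply, Pi.single_apply]

lemma gy_l (i : Fin 4) : gy eι ((raw eι eα eβ k1 k2).l i) = Pi.single i 1 := by
  funext i'
  simp [raw_l, gy, LinearMap.funLeft_apply, Pi.single_apply]

lemma Z0_c (i : Fin 3) : Z0 eι k1 k2 ((raw eι eα eβ k1 k2).c i) = Pi.single i 1 := by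
  rw [← Zc_piv eι eβ k1 k2 i, ← Z0_single]
  congr 1
  fin_cases i <;> simp [Raw.c, raw_m, raw_l, H, pivotEquiv]

lemma gx_vec (a b : Fin 4 → ℤ) (w : ℤ) : gx eι (vec eι k1 a b w) = cst a := by
  funext i; simp [gx, LinearMap.funLeft_apply, vec]

lemma gy_vec (a b : Fin 4 → ℤ) (w : ℤ) : gy eι (vec eι k1 a b w) = cst b := by
  funext i; simp [gy, LinearMap.funLeft_apply, vec]

lemma p_mem : ∀ a k, ∑ i, xp a i * cM0 i k + ∑ j, yp a j * cL0 j k + wp a * P0 k = 0 := by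
  decide
lemma ν_mem : ∀ a k, ∑ i, xν a i * cM0 i k + ∑ j, yν a j * cL0 j k + 0 * P0 k = 0 := by
  decide

lemma raw_p (a : Fin 5) : (raw eι eα eβ k1 k2).B *ᵥ (raw eι eα eβ k1 k2).v a
    = vec eι k1 (xp a) (yp a) (wp a) :=
  B_of_Z0 _ _ _ _ _ _ (Z0_vec _ _ _ _ _ _ (p_mem a))

lemma raw_ν (k : Fin 3) :
    (raw eι eα eβ k1 k2).B *ᵥ Pi.single ((ix eι eα eβ k1 k2).k k) 1
    = vec eι k1 (xν k) (yν k) 0 := by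
  rw [← B_of_Z0 eι eα eβ k1 k2 _ (Z0_vec eι k1 k2 _ _ _ (ν_mem k))]
  congr 1
  funext b
  rw [← eβ.symm_apply_apply b]
  rcases eβ b with c | w
  · fin_cases k <;> fin_cases c <;> simp [ix, H, pivotEquiv, vec, cst, xν, yν]
  · fin_cases k <;> simp [ix, H, pivotEquiv, vec, cst, xν, yν]

/-- The sample configuration satisfies all explicit genericity conditions. -/
lemma gen_ne_zero (b : Prop) [Decidable b] (hb : b → k1 ≠ k2) :
    (raw eι eα eβ k1 k2).gen (ix eι eα eβ k1 k2) b ≠ 0 := by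
  set t := raw eι eα eβ k1 k2 with ht
  set I := ix eι eα eβ k1 k2 with hI
  obtain ⟨hx, fx⟩ := forms_eq I.eA t.A0 t.m (gx eι) (A0_inj ..) (gx_A0 eι eα eβ k1 k2) (gx_m eι eα eβ k1 k2)
  obtain ⟨hy, fy⟩ := forms_eq I.eA t.A1 t.l (gy eι) (A1_inj ..) (gy_A1 eι eα eβ k1 k2) (gy_l eι eα eβ k1 k2)
  obtain ⟨hz, fz⟩ := forms_eq I.eB t.B t.c (Z0 eι k1 k2) (B_inj ..) (Z0_B eι eα eβ k1 k2) (Z0_c eι eα eβ k1 k2)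
  have hproj : ∀ k : ω, t.proj I (Pi.single (eι.symm (Sum.inr (Sum.inr k))) 1)
      = (t.δx I * t.δy I) • Pi.single (eι.symm (Sum.inr (Sum.inr k))) 1 := by
    intro k
    have h1 : gx eι (Pi.single (eι.symm (Sum.inr (Sum.inr k))) 1) = 0 := by
      funext i; simp [gx, LinearMap.funLeft_apply]
    have h2 : gy eι (Pi.single (eι.symm (Sum.inr (Sum.inr k))) 1) = 0 := by
      funext i; simp [gy, LinearMap.funLeft_apply]
    simp only [Raw.proj, fx, fy, h1, h2]
    simp
  have hw : t.δz I * (t.δx I * t.δy I) ≠ 0 := mul_ne_zero hz (mul_ne_zero hx hy)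
  refine mul_ne_zero (mul_ne_zero (mul_ne_zero hx hy) hz) ((Dat.nice_iff _ b).1 ?_)
  refine nice_of_values (t.dat I) b hx hy hz hw hw ?_ ?_ ?_ ?_ ?_ ?_ ?_ ?_
  · intro i
    refine (fz (t.m i)).trans ?_
    rw [ht, raw_m, Z0_single]; simp [Zc]
  · intro j
    refine (fz (t.l j)).trans ?_
    rw [ht, raw_l, Z0_single]; simp [Zc]
  · refine (fz (t.proj I _)).trans ?_
    rw [show I.o1 = eι.symm (Sum.inr (Sum.inr k1)) from rfl, hproj, map_smul, Z0_single, smul_smul]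
    simp [Zc, pq, Raw.δz]
  · intro hbb
    refine (fz (t.proj I _)).trans ?_
    rw [show I.o2 = eι.symm (Sum.inr (Sum.inr k2)) from rfl, hproj, map_smul, Z0_single, smul_smul]
    simp [Zc, pq, Raw.δz, (hb hbb).symm]
  · intro a
    refine (fx (t.B *ᵥ t.v a)).trans ?_
    rw [ht, raw_p, gx_vec]
  · intro a
    refine (fy (t.B *ᵥ t.v a)).trans ?_
    rw [ht, raw_p, gy_vec]
  · intro k
    refine (fx (t.B *ᵥ Pi.single (I.k k) 1)).trans ?_
    rw [ht, hI, raw_ν, gx_vec]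
  · intro k
    refine (fy (t.B *ᵥ Pi.single (I.k k) 1)).trans ?_
    rw [ht, hI, raw_ν, gy_vec]

/-- The explicit genericity conditions are not identically violated. -/
lemma univ_gen_ne_zero (b : Prop) [Decidable b] (hb : b → k1 ≠ k2) :
    (Raw.univ ι α β).gen (ix eι eα eβ k1 k2) b ≠ 0 := by
  intro h
  refine gen_ne_zero eι eα eβ k1 k2 b hb ?_
  have h1 := congrArg (eval (raw eι eα eβ k1 k2).toPar) h
  rw [Raw.map_gen, map_zero] at h1
  rw [← h1]
  congr 1
  rw [Raw.univ, Raw.map_ofPar]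
  conv_lhs => rw [← Raw.ofPar_toPar (raw eι eα eβ k1 k2)]
  congr 1
  funext s; simp

end
end Sample
end SampleConfiguration

/-! ### The generic statement -/

theorem cubics_codim_443 (n : ℕ) (hn : 8 ≤ n) :
    Generic
      (ι := (Fin 2 × Fin (n + 1) × Fin (n - 3)) ⊕ (Fin (n + 1) × Fin (n - 2)) ⊕
        (Fin 2 × Fin 4 × Fin (n - 3)) ⊕ (Fin 5 × Fin (n - 2))) fun t =>
      let A : Fin 2 → Matrix (Fin (n + 1)) (Fin (n - 3)) ℂ :=
        fun k => Matrix.of fun i j => t (Sum.inl (k, i, j))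
      let B : Matrix (Fin (n + 1)) (Fin (n - 2)) ℂ :=
        Matrix.of fun i j => t (Sum.inr (Sum.inl (i, j)))
      let lm : Fin 2 → Fin 4 → Fin (n + 1) → ℂ :=
        fun k s => (A k).mulVec fun j => t (Sum.inr (Sum.inr (Sum.inl (k, s, j))))
      let nn : Fin 5 → Fin (n + 1) → ℂ :=
        fun s => B.mulVec fun j => t (Sum.inr (Sum.inr (Sum.inr (s, j))))
      let U : Set (Fin (n + 1) → ℂ) :=
        Set.range (A 0).mulVec ∪ Set.range (A 1).mulVec ∪ Set.range B.mulVec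
      let S : Set (Fin (n + 1) → ℂ) := Set.range (lm 0) ∪ Set.range (lm 1) ∪ Set.range nn
      (∀ k, Function.Injective (A k).mulVec) ∧ Function.Injective B.mulVec ∧
      Module.finrank ℂ (SingSpace n 3 S U) = 1 ∧
      ∀ f ∈ SingSpace n 3 S U, f ≠ 0 →
        ∀ q : Fin (n + 1) → ℂ, q ≠ 0 → SingularAt f q → q ∈ U := by
  -- coordinates: four for the points of `M`, four for those of `L`, and `n - 7` for `L ∩ M`
  have eι : Fin (n + 1) ≃ Fin 4 ⊕ Fin 4 ⊕ Fin (n - 7) :=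
    Fintype.equivOfCardEq (by simp; omega)
  have eα : Fin (n - 3) ≃ Fin 4 ⊕ Fin (n - 7) := Fintype.equivOfCardEq (by simp; omega)
  have eβ : Fin (n - 2) ≃ Fin 5 ⊕ Fin (n - 7) := Fintype.equivOfCardEq (by simp; omega)
  let k1 : Fin (n - 7) := ⟨0, by omega⟩
  let k2 : Fin (n - 7) := ⟨n - 8, by omega⟩
  have hk : 9 ≤ n → k1 ≠ k2 := by
    intro h9 h
    have : 0 = n - 8 := congrArg Fin.val h
    omega
  let I := Sample.ix eι eα eβ k1 k2
  have hg : (Raw.univ (Fin (n + 1)) (Fin (n - 3)) (Fin (n - 2))).gen I (9 ≤ n) ≠ 0 :=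
    Sample.univ_gen_ne_zero eι eα eβ k1 k2 _ hk
  obtain ⟨F, hF0, hF⟩ := Raw.exists_sing_poly I hg
  refine ⟨(Raw.univ _ _ _).gen I (9 ≤ n) * F, mul_ne_zero hg hF0, fun t ht => ?_⟩
  rw [map_mul, mul_ne_zero_iff] at ht
  obtain ⟨ht1, ht2⟩ := ht
  rw [Raw.map_gen, Raw.univ, Raw.map_ofPar,
    show (eval t : _ → ℂ) ∘ (X : _ → MvPolynomial _ ℂ) = t from funext fun s => by simp] at ht1
  have hsing := hF t ht2
  clear hF ht2
  intro A B lm nn U S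
  set r : Raw (Fin (n + 1)) (Fin (n - 3)) (Fin (n - 2)) ℂ := Raw.ofPar t with hr
  simp only [Raw.gen, mul_ne_zero_iff] at ht1
  obtain ⟨⟨⟨hx, hy⟩, hz⟩, hgood⟩ := ht1
  have hD := (Dat.nice_iff (r.dat I) (9 ≤ n)).2 hgood
  have hS := r.std I hx hy
  have hU : ∀ v, v ∈ U ↔ (r.dat I).x v = 0 ∨ (r.dat I).y v = 0 ∨ (r.dat I).z v = 0 := by
    intro v
    rw [← or_assoc]
    exact (or_congr (or_congr (forms_ker I.eA r.A0 r.m hx v) (forms_ker I.eA r.A1 r.l hy v))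
      (forms_ker I.eB r.B r.c hz v)).symm
  have hb : 9 ≤ n ∨ ∀ w, (r.dat I).x w = 0 → (r.dat I).y w = 0 →
      ∃ κ : ℂ, w = κ • (r.dat I).w1 := by
    by_cases h9 : 9 ≤ n
    · exact Or.inl h9
    · exact Or.inr (Dat.line_of_card hS hD (by rw [Fintype.card_fin]; omega))
  obtain ⟨h1, h2⟩ := Dat.dim_one hS hD hb U S hU rfl
  refine ⟨?_, sqm_inj I.eB r.B r.c hz, h1, fun f hf hf0 q _ hq => (hU q).2 (hsing q ?_)⟩
  · intro k
    fin_cases k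
    · exact sqm_inj I.eA r.A0 r.m hx
    · exact sqm_inj I.eA r.A1 r.l hy
  · exact h2 f hf hf0 q hq
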